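/- Fix N ≥ 2 and a transition relation → on the symbols {1,…,N} whose subshift is transitive. An N-tuple (A₁,…,A_N) of matrices in SL(2,ℝ) is uniformly hyperbolic with respect to this subshift if and only if there exist nonempty open sets M_α ⊂ ℙ¹, one for each symbol α, with closure(M_α) ≠ ℙ¹, such that whenever α → β one has A_β(closure M_α) ⊆ M_β. Moreover, when such sets exist each M_α can be chosen to have finitely many connected components whose closures are pairwise disjoint. -/

import Mathlib

/-!
Write `v ∧ p` for the area form on `ℝ²`, which `SL(2,ℝ)` preserves.

*Multicones imply hyperbolicity.* In the affine chart with the direction `v` at infinity, the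
distance between `p` and `q` is `|p ∧ q| / (|v ∧ p| |v ∧ q|)`. For `v` in the cone over `M_α`, the
complement of `M_α` has finite diameter in this chart, and strict inclusion of multicones shrinks
that diameter by a uniform factor `θ < 1` at each admissible step (`crossBound_contract`). After a
word `X` of length `n`, two fixed directions outside the final cone satisfy
`|p ∧ q| ≤ B θⁿ |X v ∧ p| |X v ∧ q|`, so `‖X v‖²` is at least a constant times `θ⁻ⁿ`.

*Hyperbolicity implies multicones.* The cones are built from finite orbit segments, without
passing to invariant directions. If a segment keeps its norms above `τ` and has both ends below
`ρ τ`, then the matrix product along it has norm at most affine in its length (`blk_bound`), so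
exponential growth bounds that length. A combinatorial argument (`half_le_of_peak`) then yields `n₀`
such that no nonzero orbit segment of length `2 n₀` is maximal, up to a factor `2`, at its midpoint
(`exists_no_peak`). The cone at `α` (`pastCone`) consists of the endpoints of orbit segments with
last letter `α` which exceed, up to a slack in `(1, 2)`, everything seen in the past, the maximum
having occurred at time `n₀` and fewer than `n₀` steps ago. The slack grows strictly with each step
since the maximum, which turns weak inequalities into strict ones and gives strict invariance
(`mulVec_mem_pastCone`); the absence of peaks stops the count from reaching `n₀`. Maximal points of
strongly growing orbits show that cones are nonempty, and maximal points of strongly decaying orbits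
that they are not everything.

*Finitely many components.* The image sets `⋃ A_β (closure M_α)` are compact in `M_β`, so a thinner
open set with finitely many components with disjoint closures fits in between (`exists_thinning`).
-/

open Matrix

noncomputable section

/-- `SL(2,ℝ)`. -/
abbrev SL2 := Matrix.SpecialLinearGroup (Fin 2) ℝ

/-- Operator norm of a `2 × 2` real matrix, induced by the Euclidean norm on `ℝ²`. -/
noncomputable def opNorm (A : Matrix (Fin 2) (Fin 2) ℝ) : ℝ :=
  ‖Matrix.toEuclideanCLM (𝕜 := ℝ) A‖

/-- Trace of an element of `SL(2,ℝ)`. -/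
def trace2 (A : SL2) : ℝ := Matrix.trace (A : Matrix (Fin 2) (Fin 2) ℝ)

/-- Topology on `SL(2,ℝ)` induced from the space of `2 × 2` real matrices. -/
instance : TopologicalSpace SL2 := instTopologicalSpaceSubtype

/-- The real projective line: quotient of `ℝ² ∖ {0}` by nonzero scalar multiplication. -/
abbrev P1 := Projectivization ℝ (Fin 2 → ℝ)

/-- The quotient topology on the real projective line. -/
instance : TopologicalSpace P1 := instTopologicalSpaceQuotient

/-- The projective action of `SL(2,ℝ)` on the real projective line. -/
def projAct (A : SL2) : P1 → P1 :=
  Projectivization.map (Matrix.SpecialLinearGroup.toLin' A).toLinearMap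
    (Matrix.SpecialLinearGroup.toLin' A).injective

/-- For a word `w = [i₁, …, iₙ]`, the product `A_{iₙ} ⋯ A_{i₁}`. -/
def wordProd {N : ℕ} (A : Fin N → SL2) (w : List (Fin N)) : SL2 :=
  (w.reverse.map A).prod

/-- Uniform hyperbolicity with respect to the full shift on `N` symbols:
every product of `n` matrices has operator norm at least `C·λⁿ`. -/
def UnifHyp {N : ℕ} (A : Fin N → SL2) : Prop :=
  ∃ C > (0:ℝ), ∃ lam > (1:ℝ), ∀ w : List (Fin N), w ≠ [] →
    opNorm (wordProd A w : Matrix (Fin 2) (Fin 2) ℝ) ≥ C * lam ^ w.length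

/-- Transitivity of the subshift of finite type given by the transition relation `T`:
any symbol can be joined to any other by an admissible word. -/
def TransitiveSubshift {N : ℕ} (T : Fin N → Fin N → Prop) : Prop :=
  ∀ α β : Fin N, ∃ w : List (Fin N), w ≠ [] ∧ w.Chain' T ∧
    w.head? = some α ∧ w.getLast? = some β

/-- Uniform hyperbolicity with respect to the subshift determined by the
transition relation `T`. -/
def UnifHypSub {N : ℕ} (T : Fin N → Fin N → Prop) (A : Fin N → SL2) : Prop :=
  ∃ C > (0:ℝ), ∃ lam > (1:ℝ), ∀ w : List (Fin N), w ≠ [] → w.Chain' T →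
    opNorm (wordProd A w : Matrix (Fin 2) (Fin 2) ℝ) ≥ C * lam ^ w.length

/-- For a word `w` in two letters (`true ↦ A`, `false ↦ B`), the corresponding
product of the matrices `A`, `B` (letters applied right-to-left). -/
def pairProd (A B : SL2) (w : List Bool) : SL2 :=
  (w.reverse.map fun b => if b then A else B).prod

/-- Uniform hyperbolicity of a pair `(A,B)` with respect to the full shift on two symbols. -/
def UnifHypPair (A B : SL2) : Prop :=
  ∃ C > (0:ℝ), ∃ lam > (1:ℝ), ∀ w : List Bool, w ≠ [] →
    opNorm (pairProd A B w : Matrix (Fin 2) (Fin 2) ℝ) ≥ C * lam ^ w.length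

/-- The hyperbolicity locus for the full shift on two symbols. -/
def UHpairs : Set (SL2 × SL2) := {p | UnifHypPair p.1 p.2}

/-- The set of pairs having an elliptic product. -/
def Epairs : Set (SL2 × SL2) :=
  {p | ∃ w : List Bool, w ≠ [] ∧ |trace2 (pairProd p.1 p.2 w)| < 2}

/-- An open interval in the projective line: a nonempty open connected subset
whose complement contains more than one point. -/
def IsOpenInterval (I : Set P1) : Prop :=
  IsOpen I ∧ IsConnected I ∧ Iᶜ.Nontrivial

/-- `H₀`: pairs possessing a common strictly invariant open interval. -/
def H0 : Set (SL2 × SL2) :=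
  {p | ∃ I : Set P1, IsOpenInterval I ∧
        projAct p.1 '' closure I ⊆ I ∧ projAct p.2 '' closure I ⊆ I}

/-- `H_id`: pairs with `|tr A| > 2`, `|tr B| > 2`, `|tr AB| > 2`, `tr A · tr B · tr AB < 0`. -/
def Hid : Set (SL2 × SL2) :=
  {p | 2 < |trace2 p.1| ∧ 2 < |trace2 p.2| ∧ 2 < |trace2 (p.1 * p.2)| ∧
       trace2 p.1 * trace2 p.2 * trace2 (p.1 * p.2) < 0}

/-- `F₊(A,B) = (A, AB)`. -/
def Fplus (p : SL2 × SL2) : SL2 × SL2 := (p.1, p.1 * p.2)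

/-- `F₋(A,B) = (BA, B)`. -/
def Fminus (p : SL2 × SL2) : SL2 × SL2 := (p.2 * p.1, p.2)

/-- `applySeq [ε₁, …, ε_k] = F_{ε_k} ∘ ⋯ ∘ F_{ε₁}`, where `true` stands for `+`
and `false` for `−`. -/
def applySeq (s : List Bool) (p : SL2 × SL2) : SL2 × SL2 :=
  s.foldl (fun q e => if e then Fplus q else Fminus q) p

/-- A pair `(A,B)` is free if `|tr A| ≥ 2`, `|tr B| ≥ 2`, `|tr AB| ≥ 2` and
`tr A · tr B · tr AB < 0`. -/
def FreePair (p : SL2 × SL2) : Prop :=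
  2 ≤ |trace2 p.1| ∧ 2 ≤ |trace2 p.2| ∧ 2 ≤ |trace2 (p.1 * p.2)| ∧
    trace2 p.1 * trace2 p.2 * trace2 (p.1 * p.2) < 0

/-- A pair is straight if it lies in the closure of `H₀`. -/
def Straight (p : SL2 × SL2) : Prop := p ∈ closure H0

/-- A pair `(A,B)` is twisted if `|tr A| ≥ 2`, `|tr B| ≥ 2` and it is not straight. -/
def Twisted (p : SL2 × SL2) : Prop :=
  2 ≤ |trace2 p.1| ∧ 2 ≤ |trace2 p.2| ∧ ¬ Straight p

/-- A pair is almost hyperbolic if every image of it under the monoid generated by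
`F₊`, `F₋` consists of two non-elliptic matrices. -/
def AlmostHyperbolic (p : SL2 × SL2) : Prop :=
  ∀ s : List Bool, 2 ≤ |trace2 (applySeq s p).1| ∧ 2 ≤ |trace2 (applySeq s p).2|

/-- Group-hyperbolicity of a pair: exponential growth over all reduced words
in the free group on two generators (`true ↦ A`, `false ↦ B`). -/
def GroupHyp (A B : SL2) : Prop :=
  ∃ C > (0:ℝ), ∃ τ > (0:ℝ), ∀ g : FreeGroup Bool, g ≠ 1 →
    opNorm ((FreeGroup.lift (fun b => if b then A else B) g : SL2) :
        Matrix (Fin 2) (Fin 2) ℝ) ≥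
      C * Real.exp (τ * (FreeGroup.toWord g).length)

/-- `M` has finitely many connected components, and distinct components have
disjoint closures. -/
def FinCompDisjClosures (M : Set P1) : Prop :=
  {C : Set P1 | ∃ x ∈ M, C = connectedComponentIn M x}.Finite ∧
    ∀ x ∈ M, ∀ y ∈ M, connectedComponentIn M x ≠ connectedComponentIn M y →
      closure (connectedComponentIn M x) ∩ closure (connectedComponentIn M y) = ∅

end

/-! ### Thinning open sets -/

section Thinning
open Set

/-- Between a compact set and an open neighbourhood one can insert a finite union of connected open
sets with pairwise disjoint closures: a finite cover of minimal cardinality works, since two members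
whose closures meet could be merged. -/
theorem exists_thinning {X : Type*} [TopologicalSpace X] [CompactSpace X] [T2Space X]
    [LocallyConnectedSpace X] {K M : Set X} (hK : IsCompact K) (hM : IsOpen M) (hKM : K ⊆ M) :
    ∃ F : Finset (Set X), (∀ U ∈ F, IsOpen U ∧ IsConnected U ∧ closure U ⊆ M) ∧
      K ⊆ ⋃₀ (F : Set (Set X)) ∧
      ∀ U ∈ F, ∀ W ∈ F, U ≠ W → Disjoint (closure U) (closure W) := by
  classical
  have nbhd : ∀ p ∈ M, ∃ W : Set X, IsOpen W ∧ IsConnected W ∧ p ∈ W ∧ closure W ⊆ M := by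
    intro p hp
    obtain ⟨C, hC, hCc, hCM⟩ := exists_mem_nhds_isClosed_subset (hM.mem_nhds hp)
    obtain ⟨W, hWC, hW, hpW, hWconn⟩ :=
      locallyConnectedSpace_iff_subsets_isOpen_isConnected.1 ‹_› p C hC
    exact ⟨W, hW, hWconn, hpW, (closure_minimal hWC hCc).trans hCM⟩
  choose! W hWo hWconn hpW hWM using nbhd
  let good : ℕ → Prop := fun n => ∃ F : Finset (Set X), F.card = n ∧
    (∀ U ∈ F, IsOpen U ∧ IsConnected U ∧ closure U ⊆ M) ∧ K ⊆ ⋃₀ (F : Set (Set X))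
  have hex : ∃ n, good n := by
    obtain ⟨t, htK, hcov⟩ := hK.elim_nhds_subcover W
      (fun x hx => (hWo x (hKM hx)).mem_nhds (hpW x (hKM hx)))
    refine ⟨_, t.image W, rfl, ?_, ?_⟩
    · intro U hU
      obtain ⟨x, hx, rfl⟩ := Finset.mem_image.1 hU
      have := hKM (htK x hx)
      exact ⟨hWo x this, hWconn x this, hWM x this⟩
    · intro x hx
      obtain ⟨y, hy, hxy⟩ := mem_iUnion₂.1 (hcov hx)
      exact ⟨W y, by simpa using ⟨y, hy, rfl⟩, hxy⟩
  obtain ⟨F, hcard, hF, hcov⟩ := Nat.find_spec hex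
  refine ⟨F, hF, hcov, fun U hU U' hU' hne => ?_⟩
  by_contra hdis
  obtain ⟨p, hp, hp'⟩ := Set.not_disjoint_iff.1 hdis
  have hpM : p ∈ M := (hF U hU).2.2 hp
  -- joining `U` and `U'` through a connected neighbourhood of a common boundary point
  -- gives a smaller family
  have h1 : IsConnected (U ∪ W p) := by
    obtain ⟨z, hz, hz'⟩ := mem_closure_iff.1 hp _ (hWo p hpM) (hpW p hpM)
    exact IsConnected.union ⟨z, hz', hz⟩ (hF U hU).2.1 (hWconn p hpM)
  have h2 : IsConnected (U ∪ W p ∪ U') := by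
    obtain ⟨z, hz, hz'⟩ := mem_closure_iff.1 hp' _ (hWo p hpM) (hpW p hpM)
    exact IsConnected.union ⟨z, Or.inr hz, hz'⟩ h1 (hF U' hU').2.1
  let F' : Finset (Set X) := insert (U ∪ W p ∪ U') ((F.erase U).erase U')
  have hF' : good F'.card := by
    refine ⟨F', rfl, ?_, ?_⟩
    · intro V hV
      rcases Finset.mem_insert.1 hV with rfl | hV
      · refine ⟨((hF U hU).1.union (hWo p hpM)).union (hF U' hU').1, h2, ?_⟩
        rw [closure_union, closure_union]
        exact union_subset (union_subset (hF U hU).2.2 (hWM p hpM)) (hF U' hU').2.2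
      · exact hF V (Finset.mem_of_mem_erase (Finset.mem_of_mem_erase hV))
    · intro x hx
      obtain ⟨V, hV, hxV⟩ := hcov hx
      by_cases e1 : V = U
      · exact ⟨_, Finset.mem_coe.2 (Finset.mem_insert_self _ _), Or.inl (Or.inl (e1 ▸ hxV))⟩
      by_cases e2 : V = U'
      · exact ⟨_, Finset.mem_coe.2 (Finset.mem_insert_self _ _), Or.inr (e2 ▸ hxV)⟩
      · exact ⟨V, Finset.mem_coe.2 (Finset.mem_insert_of_mem
          (Finset.mem_erase.2 ⟨e2, Finset.mem_erase.2 ⟨e1, hV⟩⟩)), hxV⟩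
  have hle := Nat.find_min' hex hF'
  have hlt : F'.card < F.card := by
    have a1 := Finset.card_insert_le (U ∪ W p ∪ U') ((F.erase U).erase U')
    have hU'e : U' ∈ F.erase U := Finset.mem_erase.2 ⟨hne.symm, hU'⟩
    have a2 := Finset.card_erase_add_one hU'e
    have a3 := Finset.card_erase_add_one hU
    have : F'.card ≤ ((F.erase U).erase U').card + 1 := a1
    omega
  omega

theorem finComp_sUnion {F : Finset (Set P1)} (hF : ∀ U ∈ F, IsOpen U ∧ IsConnected U)
    (hd : ∀ U ∈ F, ∀ W ∈ F, U ≠ W → Disjoint (closure U) (closure W)) :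
    FinCompDisjClosures (⋃₀ (F : Set (Set P1))) := by
  have key : ∀ U ∈ F, ∀ x ∈ U, connectedComponentIn (⋃₀ (F : Set (Set P1))) x = U := by
    intro U hU x hx
    have hxV : x ∈ ⋃₀ (F : Set (Set P1)) := ⟨U, hU, hx⟩
    apply Subset.antisymm
    · have hsub : connectedComponentIn (⋃₀ (F : Set (Set P1))) x ⊆
          U ∪ ⋃₀ {W | W ∈ F ∧ W ≠ U} := by
        refine (connectedComponentIn_subset _ _).trans ?_
        rintro y ⟨W, hW, hy⟩
        by_cases e : W = U
        · exact Or.inl (e ▸ hy)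
        · exact Or.inr ⟨W, ⟨hW, e⟩, hy⟩
      refine IsPreconnected.subset_left_of_subset_union (hF U hU).1
        (isOpen_sUnion fun W hW => (hF W hW.1).1) ?_ hsub
        ⟨x, mem_connectedComponentIn hxV, hx⟩ isPreconnected_connectedComponentIn
      rw [Set.disjoint_sUnion_right]
      intro W hW
      exact (hd U hU W hW.1 hW.2.symm).mono subset_closure subset_closure
    · exact (hF U hU).2.isPreconnected.subset_connectedComponentIn hx
        (fun y hy => ⟨U, hU, hy⟩)
  refine ⟨F.finite_toSet.subset ?_, ?_⟩
  · rintro C ⟨x, ⟨U, hU, hx⟩, rfl⟩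
    rw [key U hU x hx]; exact hU
  · rintro x ⟨U, hU, hx⟩ y ⟨W, hW, hy⟩ hne
    rw [key U hU x hx, key W hW y hy] at hne ⊢
    exact Set.disjoint_iff_inter_eq_empty.1 (hd U hU W hW hne)

end Thinning

/-! ### The area form and the topology of the projective line -/

/-- The area form `v ∧ p` on `ℝ²`. -/
def wdg (v p : Fin 2 → ℝ) : ℝ := v 0 * p 1 - v 1 * p 0

theorem continuous_wdg : Continuous fun q : (Fin 2 → ℝ) × (Fin 2 → ℝ) => wdg q.1 q.2 := by
  unfold wdg; fun_prop

theorem abs_coord_le (v : Fin 2 → ℝ) (i : Fin 2) : |v i| ≤ ‖v‖ := norm_le_pi_norm v i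

theorem norm_cases (v : Fin 2 → ℝ) : ‖v‖ = |v 0| ∨ ‖v‖ = |v 1| := by
  have h : ‖v‖ ≤ max |v 0| |v 1| := by
    rw [pi_norm_le_iff_of_nonneg (by positivity)]
    intro i; fin_cases i <;> simp
  rcases le_total |v 0| |v 1| with h' | h'
  · right; rw [max_eq_right h'] at h; exact le_antisymm h (abs_coord_le v 1)
  · left; rw [max_eq_left h'] at h; exact le_antisymm h (abs_coord_le v 0)

theorem abs_wdg_le (v p : Fin 2 → ℝ) : |wdg v p| ≤ 2 * ‖v‖ * ‖p‖ := by
  have h0 := abs_coord_le v 0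
  have h1 := abs_coord_le v 1
  have g0 := abs_coord_le p 0
  have g1 := abs_coord_le p 1
  calc |wdg v p| ≤ |v 0 * p 1| + |v 1 * p 0| := abs_sub _ _
    _ = |v 0| * |p 1| + |v 1| * |p 0| := by rw [abs_mul, abs_mul]
    _ ≤ ‖v‖ * ‖p‖ + ‖v‖ * ‖p‖ := by gcongr
    _ = _ := by ring

/-- Elements of `SL(2,ℝ)` preserve area. -/
theorem wdg_mulVec (A : SL2) (v p : Fin 2 → ℝ) : wdg (A.1 *ᵥ v) (A.1 *ᵥ p) = wdg v p := by
  have h := A.2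
  rw [Matrix.det_fin_two] at h
  simp only [wdg, Matrix.mulVec, dotProduct, Fin.sum_univ_two]
  linear_combination (v 0 * p 1 - v 1 * p 0) * h

theorem wdg_smul_smul (a b : ℝ) (v p : Fin 2 → ℝ) : wdg (a • v) (b • p) = a * b * wdg v p := by
  simp [wdg]; ring

theorem wdg_eq_zero_iff {v p : Fin 2 → ℝ} (hv : v ≠ 0) (hp : p ≠ 0) :
    wdg v p = 0 ↔ Projectivization.mk ℝ v hv = Projectivization.mk ℝ p hp := by
  rw [Projectivization.mk_eq_mk_iff']
  constructor
  · intro h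
    unfold wdg at h
    have : p 0 ≠ 0 ∨ p 1 ≠ 0 := by
      by_contra hcon
      push Not at hcon
      exact hp (by ext i; fin_cases i <;> simp [hcon])
    rcases this with h0 | h0
    · refine ⟨v 0 / p 0, ?_⟩
      ext i; fin_cases i
      · simp [h0]
      · simp; field_simp; linarith
    · refine ⟨v 1 / p 1, ?_⟩
      ext i; fin_cases i
      · simp; field_simp; linarith
      · simp [h0]
  · rintro ⟨a, rfl⟩
    simp [wdg]; ring

theorem mulVec_ne_zero (A : SL2) {v : Fin 2 → ℝ} (hv : v ≠ 0) : A.1 *ᵥ v ≠ 0 := by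
  intro h
  apply hv
  have : (A⁻¹ * A).1 *ᵥ v = 0 := by
    rw [Matrix.SpecialLinearGroup.coe_mul, ← Matrix.mulVec_mulVec, h, Matrix.mulVec_zero]
  simpa using this

theorem projAct_mk (A : SL2) {v : Fin 2 → ℝ} (hv : v ≠ 0) :
    projAct A (Projectivization.mk ℝ v hv) =
      Projectivization.mk ℝ (A.1 *ᵥ v) (mulVec_ne_zero A hv) := rfl

theorem continuous_mk' : Continuous (Projectivization.mk' ℝ : {v : Fin 2 → ℝ // v ≠ 0} → P1) :=
  continuous_quotient_mk'

theorem isOpen_P1_iff {M : Set P1} :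
    IsOpen M ↔ IsOpen ((Projectivization.mk' ℝ : {v : Fin 2 → ℝ // v ≠ 0} → P1) ⁻¹' M) :=
  isQuotientMap_quotient_mk'.isOpen_preimage.symm

theorem isOpen_ne_zero : IsOpen {v : Fin 2 → ℝ | v ≠ 0} := isOpen_ne

/-- The cone of nonzero vectors over a subset of the projective line. -/
def coneOver (M : Set P1) : Set (Fin 2 → ℝ) := {v | ∃ h : v ≠ 0, Projectivization.mk ℝ v h ∈ M}

theorem mem_coneOver {M : Set P1} {v : Fin 2 → ℝ} (h : v ≠ 0) :
    v ∈ coneOver M ↔ Projectivization.mk ℝ v h ∈ M := ⟨fun ⟨_, h⟩ => h, fun h' => ⟨h, h'⟩⟩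

theorem coneOver_smul {M : Set P1} {v : Fin 2 → ℝ} {c : ℝ} (hc : c ≠ 0) :
    c • v ∈ coneOver M ↔ v ∈ coneOver M := by
  by_cases hv : v = 0
  · simp [hv]
  have hcv : c • v ≠ 0 := smul_ne_zero hc hv
  rw [mem_coneOver hv, mem_coneOver hcv,
    (Projectivization.mk_eq_mk_iff' ℝ (c • v) v hcv hv).2 ⟨c, rfl⟩]

theorem isOpen_coneOver {M : Set P1} (hM : IsOpen M) : IsOpen (coneOver M) := by
  have := isOpen_ne_zero.isOpenMap_subtype_val _ (isOpen_P1_iff.1 hM)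
  convert this using 1
  ext v
  constructor
  · rintro ⟨h, hv⟩; exact ⟨⟨v, h⟩, hv, rfl⟩
  · rintro ⟨w, hw, rfl⟩; exact ⟨w.2, hw⟩

theorem continuous_projAct (A : SL2) : Continuous (projAct A) := by
  have h : Continuous fun v : {v : Fin 2 → ℝ // v ≠ 0} =>
      Projectivization.mk' ℝ (⟨A.1 *ᵥ v.1, mulVec_ne_zero A v.2⟩ : {v : Fin 2 → ℝ // v ≠ 0}) := by
    refine continuous_mk'.comp (Continuous.subtype_mk ?_ _)
    exact (Continuous.matrix_mulVec continuous_const continuous_subtype_val)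
  exact isQuotientMap_quotient_mk'.continuous_iff.2 h

/-- The projection to the projective line is open, as the saturation of an open set is a union of
its homothetic images. -/
theorem isOpenQuotientMap_mk' :
    IsOpenQuotientMap (Projectivization.mk' ℝ : {v : Fin 2 → ℝ // v ≠ 0} → P1) where
  surjective := Quotient.mk''_surjective
  continuous := continuous_mk'
  isOpenMap := by
    intro U hU
    have hU' := isOpen_ne_zero.isOpenMap_subtype_val _ hU
    rw [isOpen_P1_iff]
    have : (Projectivization.mk' ℝ : {v : Fin 2 → ℝ // v ≠ 0} → P1) ⁻¹'
        ((Projectivization.mk' ℝ : {v : Fin 2 → ℝ // v ≠ 0} → P1) '' U) =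
        ⋃ a : ℝ, {v : {v : Fin 2 → ℝ // v ≠ 0} | a • v.1 ∈ Subtype.val '' U} := by
      ext v
      simp only [Set.mem_preimage, Set.mem_image, Set.mem_iUnion, Set.mem_ofPred_eq]
      constructor
      · rintro ⟨w, hw, e⟩
        rw [Projectivization.mk'_eq_mk, Projectivization.mk'_eq_mk,
          Projectivization.mk_eq_mk_iff'] at e
        obtain ⟨a, ha⟩ := e
        exact ⟨a, w, hw, ha.symm⟩
      · rintro ⟨a, w, hw, e⟩
        refine ⟨w, hw, ?_⟩
        rw [Projectivization.mk'_eq_mk, Projectivization.mk'_eq_mk,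
          Projectivization.mk_eq_mk_iff']
        exact ⟨a, e.symm⟩
    rw [this]
    exact isOpen_iUnion fun a => hU'.preimage (continuous_subtype_val.const_smul a)

instance : T2Space P1 := by
  rw [t2Space_iff_of_isOpenQuotientMap isOpenQuotientMap_mk']
  have : {q : {v : Fin 2 → ℝ // v ≠ 0} × {v : Fin 2 → ℝ // v ≠ 0} |
      (Projectivization.mk' ℝ q.1 : P1) = Projectivization.mk' ℝ q.2} =
      {q | wdg q.1.1 q.2.1 = 0} := by
    ext q
    exact (wdg_eq_zero_iff q.1.2 q.2.2).symm
  rw [this]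
  exact isClosed_eq (continuous_wdg.comp ((continuous_subtype_val.comp continuous_fst).prodMk
    (continuous_subtype_val.comp continuous_snd))) continuous_const

instance : CompactSpace P1 := by
  have hS : CompactSpace (Metric.sphere (0 : Fin 2 → ℝ) 1) :=
    isCompact_iff_compactSpace.1 (isCompact_sphere 0 1)
  have hne : ∀ v : Metric.sphere (0 : Fin 2 → ℝ) 1, v.1 ≠ 0 := fun v h => by
    have := v.2; simp [h] at this
  let f : Metric.sphere (0 : Fin 2 → ℝ) 1 → P1 := fun v => Projectivization.mk' ℝ ⟨v.1, hne v⟩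
  have hf : Continuous f := continuous_mk'.comp (continuous_subtype_val.subtype_mk _)
  have hsurj : Function.Surjective f := by
    intro x
    refine Projectivization.ind (fun v hv => ?_) x
    refine ⟨⟨‖v‖⁻¹ • v, by simp [norm_smul, hv]⟩, ?_⟩
    exact (Projectivization.mk_eq_mk_iff' ℝ _ _ _ _).2 ⟨‖v‖⁻¹, rfl⟩
  exact hsurj.compactSpace hf

instance : LocallyConnectedSpace P1 := by
  have : LocallyConnectedSpace {v : Fin 2 → ℝ // v ≠ 0} := isOpen_ne_zero.locallyConnectedSpace
  exact isOpenQuotientMap_mk'.isQuotientMap.isCoinducing.locallyConnectedSpace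

/-! ### Strict inclusions contract -/

/-- `CrossBound M v B`: for all `p, q` in the complement of the cone over `M`, the distance between
`p` and `q` in the affine chart with `v` at infinity, namely `|p ∧ q| / (|v ∧ p| |v ∧ q|)`, is at
most `B` (stated without division). -/
def CrossBound (M : Set P1) (v : Fin 2 → ℝ) (B : ℝ) : Prop :=
  ∀ p q : Fin 2 → ℝ, p ≠ 0 → q ≠ 0 → p ∉ coneOver M → q ∉ coneOver M →
    |wdg p q| ≤ B * (|wdg v p| * |wdg v q|)

theorem wdg_pos_on {L K : Set (Fin 2 → ℝ)} (hL : IsCompact L) (hK : IsCompact K)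
    (h : ∀ v ∈ L, ∀ p ∈ K, wdg v p ≠ 0) : ∃ η > 0, ∀ v ∈ L, ∀ p ∈ K, η ≤ |wdg v p| := by
  rcases (L ×ˢ K).eq_empty_or_nonempty with he | hne
  · refine ⟨1, one_pos, fun v hv p hp => ?_⟩
    have : (v, p) ∈ L ×ˢ K := ⟨hv, hp⟩
    simp [he] at this
  · obtain ⟨x, hx, hmin⟩ := (hL.prod hK).exists_isMinOn hne
      (f := fun q : (Fin 2 → ℝ) × (Fin 2 → ℝ) => |wdg q.1 q.2|) continuous_wdg.abs.continuousOn
    exact ⟨_, abs_pos.2 (h _ hx.1 _ hx.2), fun v hv p hp => hmin (⟨hv, hp⟩ : (v, p) ∈ L ×ˢ K)⟩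

theorem exists_unit_smul {v : Fin 2 → ℝ} (hv : v ≠ 0) :
    ∃ u : Fin 2 → ℝ, ‖u‖ = 1 ∧ v = ‖v‖ • u := by
  have : ‖v‖ ≠ 0 := norm_ne_zero_iff.2 hv
  exact ⟨‖v‖⁻¹ • v, by simp [norm_smul, this], by simp [smul_smul, this]⟩

/-- A strict inclusion of multicones contracts the bound of `CrossBound` by a definite factor. The
vectors that `A` sends outside the cone over `M'` form, after normalization, a compact set `K` away
from the cone over `M`. A point of `K` can therefore be moved by a fixed amount in the direction of
`v`, away from `q`, without entering the cone over `M`; so distances between points of `K` fall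
short of the bound valid on the whole complement by a fixed amount. -/
theorem crossBound_contract (A : SL2) {M M' : Set P1} (hM' : IsOpen M')
    (h : projAct A '' closure M ⊆ M') :
    ∃ θ < (1 : ℝ), 0 < θ ∧ ∀ v, v ∈ coneOver M → ∀ B ≥ 0, CrossBound M v B →
      CrossBound M' (A.1 *ᵥ v) (θ * B) := by
  let K : Set (Fin 2 → ℝ) := Metric.sphere 0 1 ∩ {p | A.1 *ᵥ p ∉ coneOver M'}
  let L : Set (Fin 2 → ℝ) := Metric.sphere 0 1 ∩ {v | v ∉ coneOver (closure M)ᶜ}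
  have hAc : Continuous fun p : Fin 2 → ℝ => A.1 *ᵥ p :=
    Continuous.matrix_mulVec continuous_const continuous_id
  have hK : IsCompact K := (isCompact_sphere _ _).inter_right
    ((isOpen_coneOver hM').preimage hAc).isClosed_compl
  have hO : IsOpen (coneOver (closure M)ᶜ) := isOpen_coneOver isClosed_closure.isOpen_compl
  have hL : IsCompact L := (isCompact_sphere _ _).inter_right hO.isClosed_compl
  have hne : ∀ p : Fin 2 → ℝ, ‖p‖ = 1 → p ≠ 0 := fun p hp e => by simp [e] at hp
  have hKO : K ⊆ coneOver (closure M)ᶜ := by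
    rintro p ⟨hp1, hp⟩
    have hp0 := hne p (by simpa using hp1)
    refine ⟨hp0, fun hcl => hp ?_⟩
    exact ⟨mulVec_ne_zero A hp0, h ⟨_, hcl, projAct_mk A hp0⟩⟩
  obtain ⟨δ, hδ, hthick⟩ := hK.exists_thickening_subset_open hO hKO
  obtain ⟨η, hη, hηle⟩ := wdg_pos_on hL hK (by
    rintro v ⟨hv1, hv⟩ p hp e
    have hv0 := hne v (by simpa using hv1)
    have hp0 := hne p (by simpa using hp.1)
    rw [wdg_eq_zero_iff hv0 hp0] at e
    apply hv
    obtain ⟨_, h2⟩ := hKO hp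
    exact ⟨hv0, e ▸ h2⟩)
  have hMO : ∀ p ∈ coneOver (closure M)ᶜ, p ∉ coneOver M := by
    rintro p ⟨h0, h1⟩ ⟨_, h2⟩
    exact h1 (subset_closure h2)
  -- `B₁` bounds the normalized distances; `δ / 3` is the gain from enlarging the complement
  set B₁ : ℝ := 2 / η ^ 2 with hB₁
  have hB₁pos : 0 < B₁ := by positivity
  have core : ∀ v ∈ L, ∀ B ≥ 0, CrossBound M v B → ∀ p ∈ K, ∀ q ∈ K,
      |wdg p q| ≤ max (1 / 2) (1 - δ / 3 / (2 * B₁)) * B * (|wdg v p| * |wdg v q|) := by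
    intro v hv B hB hb p hp q hq
    have hv1 : ‖v‖ = 1 := by simpa using hv.1
    have hp1 : ‖p‖ = 1 := by simpa using hp.1
    have hq1 : ‖q‖ = 1 := by simpa using hq.1
    have hvp := hηle v hv p hp
    have hvq := hηle v hv q hq
    set W := |wdg v p| * |wdg v q| with hW
    have hWη : η ^ 2 ≤ W := by rw [hW, sq]; gcongr
    have hW0 : 0 < W := lt_of_lt_of_le (by positivity) hWη
    rcases le_total (2 * B₁) B with hc | hc
    · have h1 : |wdg p q| ≤ 2 := by
        have := abs_wdg_le p q; rw [hp1, hq1] at this; linarith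
      have h2 : 2 ≤ B₁ * W := by
        rw [hB₁, div_mul_eq_mul_div, le_div_iff₀ (by positivity)]; linarith
      calc |wdg p q| ≤ B₁ * W := h1.trans h2
        _ ≤ (1 / 2 * B) * W := by gcongr; linarith
        _ ≤ _ := by gcongr; exact le_max_left _ _
    · -- move `p` along `v`, away from `q`
      obtain ⟨s, hs, hsW⟩ : ∃ s : ℝ, |s| = δ / 3 ∧
          |wdg p q - s * (wdg v p * wdg v q)| = |wdg p q| + δ / 3 * W := by
        have hd : (0 : ℝ) ≤ δ / 3 := by positivity
        have : |wdg v p * wdg v q| = W := abs_mul _ _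
        rcases le_total 0 (wdg p q) with ha | ha <;>
          rcases le_total 0 (wdg v p * wdg v q) with hb' | hb'
        · refine ⟨-(δ / 3), by rw [abs_neg, abs_of_nonneg hd], ?_⟩
          rw [abs_of_nonneg hb'] at this
          rw [abs_of_nonneg ha, this, abs_of_nonneg (by nlinarith)]; ring
        · refine ⟨δ / 3, abs_of_nonneg hd, ?_⟩
          rw [abs_of_nonpos hb'] at this
          rw [abs_of_nonneg ha, ← this, abs_of_nonneg (by nlinarith)]; ring
        · refine ⟨δ / 3, abs_of_nonneg hd, ?_⟩
          rw [abs_of_nonneg hb'] at this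
          rw [abs_of_nonpos ha, this, abs_of_nonpos (by nlinarith)]; ring
        · refine ⟨-(δ / 3), by rw [abs_neg, abs_of_nonneg hd], ?_⟩
          rw [abs_of_nonpos hb'] at this
          rw [abs_of_nonpos ha, ← this, abs_of_nonpos (by nlinarith)]; ring
      set p' := p - (s * wdg v p) • v with hp'
      have hp'O : p' ∈ coneOver (closure M)ᶜ := by
        apply hthick
        rw [Metric.mem_thickening_iff]
        refine ⟨p, hp, ?_⟩
        rw [dist_eq_norm, hp', sub_sub_cancel_left, norm_neg, norm_smul, hv1, mul_one,
          Real.norm_eq_abs, abs_mul, hs]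
        have := abs_wdg_le v p
        rw [hv1, hp1] at this
        nlinarith
      have e1 : wdg v p' = wdg v p := by simp [hp', wdg]; ring
      have e2 : wdg p' q = wdg p q - s * (wdg v p * wdg v q) := by simp [hp', wdg]; ring
      have := hb p' q hp'O.1 (hne q hq1) (hMO _ hp'O) (hMO _ (hKO hq))
      rw [e1, e2, hsW, ← hW] at this
      have h3 : |wdg p q| ≤ (B - δ / 3) * W := by linarith
      refine h3.trans ?_
      gcongr
      calc B - δ / 3 ≤ (1 - δ / 3 / (2 * B₁)) * B := by
            have : δ / 3 / (2 * B₁) * B ≤ δ / 3 := by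
              rw [div_mul_eq_mul_div, div_le_iff₀ (by positivity)]
              gcongr
            linarith
        _ ≤ _ := by gcongr; exact le_max_right _ _
  refine ⟨max (1 / 2) (1 - δ / 3 / (2 * B₁)), max_lt (by norm_num) ?_,
    lt_max_of_lt_left (by norm_num), ?_⟩
  · have : 0 < δ / 3 / (2 * B₁) := by positivity
    linarith
  intro v hv B hB hb p q hp hq hpM hqM
  -- reduce to unit vectors by homogeneity
  have hv0 : v ≠ 0 := hv.1
  obtain ⟨u, hu1, hvu⟩ := exists_unit_smul hv0
  have pull : ∀ p : Fin 2 → ℝ, p ≠ 0 → p ∉ coneOver M' →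
      ∃ c : ℝ, ∃ x ∈ K, p = c • A.1 *ᵥ x := by
    intro p hp hpM
    have hp' : A⁻¹.1 *ᵥ p ≠ 0 := mulVec_ne_zero _ hp
    obtain ⟨x, hx1, hx⟩ := exists_unit_smul hp'
    have hAx : p = ‖A⁻¹.1 *ᵥ p‖ • A.1 *ᵥ x := by
      have : A.1 *ᵥ (A⁻¹.1 *ᵥ p) = p := by
        rw [Matrix.mulVec_mulVec, ← Matrix.SpecialLinearGroup.coe_mul, mul_inv_cancel]; simp
      conv_lhs => rw [← this, hx]
      rw [Matrix.mulVec_smul]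
    refine ⟨_, x, ⟨by simpa using hx1, ?_⟩, hAx⟩
    intro hcone
    apply hpM
    rw [hAx, coneOver_smul (norm_ne_zero_iff.2 hp')]
    exact hcone
  obtain ⟨a, x, hx, rfl⟩ := pull p hp hpM
  obtain ⟨b, y, hy, rfl⟩ := pull q hq hqM
  have hnv : ‖v‖ ≠ 0 := norm_ne_zero_iff.2 hv0
  have huL : u ∈ L := by
    refine ⟨by simpa using hu1, fun hcon => ?_⟩
    have : u ∈ coneOver M := by rw [hvu, coneOver_smul hnv] at hv; exact hv
    exact hMO u hcon this
  have hub : CrossBound M u (‖v‖ ^ 2 * B) := by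
    intro p q hp hq h1 h2
    have := hb p q hp hq h1 h2
    have e : ∀ p, |wdg v p| = ‖v‖ * |wdg u p| := by
      intro p
      have := wdg_smul_smul ‖v‖ 1 u p
      rw [← hvu, one_smul, mul_one] at this
      rw [this, abs_mul, abs_norm]
    rw [e, e] at this
    linarith
  have := core u huL _ (by positivity) hub x hx y hy
  have e3 : ∀ c x, |wdg (A.1 *ᵥ v) (c • A.1 *ᵥ x)| = ‖v‖ * |c| * |wdg u x| := by
    intro c x
    rw [hvu, Matrix.mulVec_smul, wdg_smul_smul, wdg_mulVec, abs_mul, abs_mul, ← hvu, abs_norm]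
  rw [e3, e3, wdg_smul_smul, wdg_mulVec, abs_mul, abs_mul]
  calc |a| * |b| * |wdg x y| ≤ |a| * |b| * _ := mul_le_mul_of_nonneg_left this (by positivity)
    _ = _ := by ring

/-- A point of `M` admits a finite bound as the complement of the open set `M` is compact. -/
theorem exists_crossBound {M : Set P1} (hM : IsOpen M) (hne : M.Nonempty) :
    ∃ v ∈ coneOver M, ∃ B > 0, CrossBound M v B := by
  obtain ⟨x, hx⟩ := hne
  obtain ⟨v, hv⟩ : ∃ v, v ∈ coneOver M := by
    revert hx
    refine Projectivization.ind (fun v hv => ?_) x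
    exact fun hx => ⟨v, hv, hx⟩
  refine ⟨v, hv, ?_⟩
  have hK : IsCompact (Metric.sphere (0 : Fin 2 → ℝ) 1 ∩ (coneOver M)ᶜ) :=
    (isCompact_sphere _ _).inter_right (isOpen_coneOver hM).isClosed_compl
  have hne : ∀ p : Fin 2 → ℝ, ‖p‖ = 1 → p ≠ 0 := fun p hp e => by simp [e] at hp
  obtain ⟨η, hη, hle⟩ := wdg_pos_on (isCompact_singleton (x := v)) hK (by
    rintro _ rfl p hp e
    rw [wdg_eq_zero_iff hv.1 (hne p (by simpa using hp.1))] at e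
    exact hp.2 ⟨_, e ▸ hv.2⟩)
  refine ⟨2 / η ^ 2, by positivity, fun p q hp hq hpM hqM => ?_⟩
  have low : ∀ p : Fin 2 → ℝ, p ≠ 0 → p ∉ coneOver M → η * ‖p‖ ≤ |wdg v p| := by
    intro p hp hpM
    obtain ⟨u, hu, hpu⟩ := exists_unit_smul hp
    have hn : ‖p‖ ≠ 0 := norm_ne_zero_iff.2 hp
    have := hle v rfl u ⟨by simpa using hu, fun hc => hpM (by
      rw [hpu, coneOver_smul hn]; exact hc)⟩
    have e := wdg_smul_smul 1 ‖p‖ v u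
    rw [← hpu, one_smul, one_mul] at e
    rw [e, abs_mul, abs_norm, mul_comm]
    gcongr
  calc |wdg p q| ≤ 2 * ‖p‖ * ‖q‖ := abs_wdg_le p q
    _ = 2 / η ^ 2 * ((η * ‖p‖) * (η * ‖q‖)) := by field_simp
    _ ≤ _ := by gcongr <;> apply low <;> assumption

/-- The complement of `M` contains two distinct points, since it has nonempty interior. -/
theorem exists_pair_compl {M : Set P1} (hM : closure M ≠ Set.univ) :
    ∃ p q : Fin 2 → ℝ, p ≠ 0 ∧ q ≠ 0 ∧ p ∉ coneOver M ∧ q ∉ coneOver M ∧ wdg p q ≠ 0 := by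
  have hO : IsOpen (coneOver (closure M)ᶜ) := isOpen_coneOver isClosed_closure.isOpen_compl
  have hMO : ∀ p ∈ coneOver (closure M)ᶜ, p ∉ coneOver M := by
    rintro p ⟨h0, h1⟩ ⟨_, h2⟩
    exact h1 (subset_closure h2)
  obtain ⟨x, hx⟩ := (Set.ne_univ_iff_exists_notMem _).1 hM
  obtain ⟨p, hp⟩ : ∃ v, v ∈ coneOver (closure M)ᶜ := by
    revert hx
    refine Projectivization.ind (fun v hv => ?_) x
    exact fun hx => ⟨v, hv, hx⟩
  let f : ℝ → (Fin 2 → ℝ) := fun t => p + t • ![-p 1, p 0]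
  have hf : Continuous f := by unfold f; fun_prop
  have h0 : ∀ᶠ t in nhds (0 : ℝ), f t ∈ coneOver (closure M)ᶜ :=
    hf.continuousAt.eventually_mem (hO.mem_nhds (by
      have : f 0 = p := by simp only [f, zero_smul, add_zero]
      rw [this]; exact hp))
  obtain ⟨ε, hε, hball⟩ := Metric.eventually_nhds_iff.1 h0
  have hq := @hball (ε / 2) (by simp [abs_of_pos hε]; linarith)
  refine ⟨p, f (ε / 2), hp.1, hq.1, hMO _ hp, hMO _ hq, ?_⟩
  have : wdg p (f (ε / 2)) = ε / 2 * (p 0 ^ 2 + p 1 ^ 2) := by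
    simp only [wdg, f, Pi.add_apply, Pi.smul_apply, smul_eq_mul, Matrix.cons_val_zero,
      Matrix.cons_val_one]
    ring
  rw [this]
  have hp0 : p 0 ^ 2 + p 1 ^ 2 ≠ 0 := by
    intro h
    have a0 : p 0 = 0 := by nlinarith [sq_nonneg (p 0), sq_nonneg (p 1)]
    have a1 : p 1 = 0 := by nlinarith [sq_nonneg (p 0), sq_nonneg (p 1)]
    exact hp.1 (by ext i; fin_cases i <;> simp [a0, a1])
  positivity

/-! ### From multicones to hyperbolicity -/

theorem norm_le_norm_toLp (v : Fin 2 → ℝ) : ‖v‖ ≤ ‖WithLp.toLp 2 v‖ := by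
  rw [pi_norm_le_iff_of_nonneg (norm_nonneg _)]
  intro i
  exact PiLp.norm_apply_le (WithLp.toLp 2 v) i

theorem norm_toLp_le (v : Fin 2 → ℝ) : ‖WithLp.toLp 2 v‖ ≤ 2 * ‖v‖ := by
  rw [EuclideanSpace.norm_eq, Fin.sum_univ_two]
  apply Real.sqrt_le_iff.2 ⟨by positivity, ?_⟩
  have h0 := abs_coord_le v 0
  have h1 := abs_coord_le v 1
  simp only [Real.norm_eq_abs]
  nlinarith [abs_nonneg (v 0), abs_nonneg (v 1)]

theorem norm_mulVec_le_opNorm (X : Matrix (Fin 2) (Fin 2) ℝ) (v : Fin 2 → ℝ) :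
    ‖X *ᵥ v‖ ≤ 2 * opNorm X * ‖v‖ := by
  have h := (Matrix.toEuclideanCLM (𝕜 := ℝ) X).le_opNorm (WithLp.toLp 2 v)
  rw [Matrix.toEuclideanCLM_toLp] at h
  have h0 : 0 ≤ opNorm X := norm_nonneg _
  calc ‖X *ᵥ v‖ ≤ _ := norm_le_norm_toLp _
    _ ≤ opNorm X * ‖WithLp.toLp 2 v‖ := h
    _ ≤ opNorm X * (2 * ‖v‖) := by gcongr; exact norm_toLp_le v
    _ = _ := by ring

theorem opNorm_le (X : Matrix (Fin 2) (Fin 2) ℝ) {b : ℝ} (hb : 0 ≤ b)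
    (h : ∀ v, ‖X *ᵥ v‖ ≤ b * ‖v‖) : opNorm X ≤ 2 * b := by
  refine ContinuousLinearMap.opNorm_le_bound _ (by positivity) fun x => ?_
  obtain ⟨v, rfl⟩ : ∃ v, x = WithLp.toLp 2 v := ⟨x.ofLp, rfl⟩
  rw [Matrix.toEuclideanCLM_toLp]
  calc _ ≤ 2 * ‖X *ᵥ v‖ := norm_toLp_le _
    _ ≤ 2 * (b * ‖v‖) := by gcongr; exact h v
    _ ≤ 2 * (b * ‖WithLp.toLp 2 v‖) := by gcongr; exact norm_le_norm_toLp v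
    _ = _ := by ring

theorem wordProd_cons {N : ℕ} (A : Fin N → SL2) (b : Fin N) (w : List (Fin N)) :
    wordProd A (b :: w) = wordProd A w * A b := by
  simp [wordProd]

theorem wordProd_append {N : ℕ} (A : Fin N → SL2) (w w' : List (Fin N)) :
    wordProd A (w ++ w') = wordProd A w' * wordProd A w := by
  simp [wordProd]

theorem reach {N : ℕ} {T : Fin N → Fin N → Prop} (hT : TransitiveSubshift T) (α β : Fin N) :
    Relation.ReflTransGen T α β := by
  obtain ⟨w, hw, hc, hh, hl⟩ := hT α β
  have := List.relationReflTransGen_of_exists_isChain w hc hw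
  rw [List.head?_eq_some_head hw] at hh
  rw [List.getLast?_eq_some_getLast hw] at hl
  rwa [Option.some.inj hh, Option.some.inj hl] at this

theorem exists_pred {N : ℕ} (hN : 2 ≤ N) {T : Fin N → Fin N → Prop} (hT : TransitiveSubshift T)
    (β : Fin N) : ∃ α, T α β := by
  have : Nontrivial (Fin N) := Fin.nontrivial_iff_two_le.2 hN
  obtain ⟨γ, hγ⟩ := exists_ne β
  rcases (reach hT γ β).cases_tail with h | ⟨c, -, h⟩
  · exact absurd h.symm hγ
  · exact ⟨c, h⟩

theorem exists_succ {N : ℕ} (hN : 2 ≤ N) {T : Fin N → Fin N → Prop} (hT : TransitiveSubshift T)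
    (α : Fin N) : ∃ β, T α β := by
  have : Nontrivial (Fin N) := Fin.nontrivial_iff_two_le.2 hN
  obtain ⟨γ, hγ⟩ := exists_ne α
  rcases (reach hT α γ).cases_head with h | ⟨c, h, -⟩
  · exact absurd h.symm hγ
  · exact ⟨c, h⟩

theorem CrossBound.mono {M : Set P1} {v : Fin 2 → ℝ} {B B' : ℝ} (h : CrossBound M v B)
    (hB : B ≤ B') : CrossBound M v B' := fun p q hp hq hpM hqM =>
  (h p q hp hq hpM hqM).trans (by gcongr)

/-- Along an admissible word the bound of `CrossBound` decays geometrically. -/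
theorem crossBound_word {N : ℕ} {T : Fin N → Fin N → Prop} {A : Fin N → SL2} {M : Fin N → Set P1}
    {θ : ℝ} (hθ : 0 < θ) (hinv : ∀ α β, T α β → projAct (A β) '' closure (M α) ⊆ M β)
    (hstep : ∀ α β, T α β → ∀ v, v ∈ coneOver (M α) → ∀ B ≥ 0, CrossBound (M α) v B →
      CrossBound (M β) ((A β).1 *ᵥ v) (θ * B)) (w : List (Fin N)) :
    ∀ α, (α :: w).IsChain T → ∀ v, v ∈ coneOver (M α) → ∀ B ≥ 0, CrossBound (M α) v B →
      ∃ β, CrossBound (M β) ((wordProd A w).1 *ᵥ v) (θ ^ w.length * B) := by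
  induction w with
  | nil =>
    intro α _ v _ B _ h
    exact ⟨α, by simpa [wordProd] using h⟩
  | cons b w ih =>
    intro α hc v hv B hB h
    rw [List.isChain_cons_cons] at hc
    have hv' : (A b).1 *ᵥ v ∈ coneOver (M b) :=
      ⟨mulVec_ne_zero _ hv.1, hinv α b hc.1 ⟨_, subset_closure hv.2, rfl⟩⟩
    obtain ⟨β, hβ⟩ := ih b hc.2 _ hv' (θ * B) (by positivity) (hstep α b hc.1 v hv B hB h)
    refine ⟨β, ?_⟩
    rw [wordProd_cons, Matrix.SpecialLinearGroup.coe_mul, ← Matrix.mulVec_mulVec, List.length_cons,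
      pow_succ, mul_assoc]
    exact hβ

/-- Multicones force uniform hyperbolicity. -/
theorem unifHypSub_of_multicone {N : ℕ} (hN : 2 ≤ N) {T : Fin N → Fin N → Prop}
    (hT : TransitiveSubshift T) {A : Fin N → SL2} {M : Fin N → Set P1}
    (hM : ∀ α, (M α).Nonempty ∧ IsOpen (M α) ∧ closure (M α) ≠ Set.univ)
    (hinv : ∀ α β, T α β → projAct (A β) '' closure (M α) ⊆ M β) : UnifHypSub T A := by
  have hne : Nonempty (Fin N) := ⟨⟨0, by omega⟩⟩
  have h1 : ∀ x : Fin N × Fin N, ∃ θ < (1 : ℝ), 0 < θ ∧ (T x.1 x.2 → ∀ v, v ∈ coneOver (M x.1) →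
      ∀ B ≥ 0, CrossBound (M x.1) v B → CrossBound (M x.2) ((A x.2).1 *ᵥ v) (θ * B)) := by
    rintro ⟨α, β⟩
    by_cases h : T α β
    · obtain ⟨θ, h1, h2, h3⟩ := crossBound_contract (A β) (hM β).2.1 (hinv α β h)
      exact ⟨θ, h1, h2, fun _ => h3⟩
    · exact ⟨1 / 2, by norm_num, by norm_num, fun h' => absurd h' h⟩
  choose f hf1 hf0 hf using h1
  obtain ⟨x₀, hx₀⟩ := Finite.exists_max f
  set θ := f x₀ with hθ
  have hθ0 : 0 < θ := hf0 x₀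
  have hθ1 : θ < 1 := hf1 x₀
  have hstep : ∀ α β, T α β → ∀ v, v ∈ coneOver (M α) → ∀ B ≥ 0, CrossBound (M α) v B →
      CrossBound (M β) ((A β).1 *ᵥ v) (θ * B) := fun α β h v hv B hB hb =>
    (hf (α, β) h v hv B hB hb).mono (by gcongr; exact hx₀ (α, β))
  choose v hv B hB hb using fun α => exists_crossBound (hM α).2.1 (hM α).1
  choose p q hp hq hpM hqM hpq using fun α => exists_pair_compl (hM α).2.2
  let c : Fin N × Fin N → ℝ := fun x =>
    |wdg (p x.2) (q x.2)| / (16 * B x.1 * ‖v x.1‖ ^ 2 * ‖p x.2‖ * ‖q x.2‖)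
  have hden : ∀ x : Fin N × Fin N, 0 < 16 * B x.1 * ‖v x.1‖ ^ 2 * ‖p x.2‖ * ‖q x.2‖ := by
    intro x
    have := norm_pos_iff.2 (hp x.2)
    have := norm_pos_iff.2 (hq x.2)
    have := norm_pos_iff.2 (hv x.1).1
    have := hB x.1
    positivity
  have hc : ∀ x, 0 < c x := fun x => div_pos (abs_pos.2 (hpq x.2)) (hden x)
  obtain ⟨x₁, hx₁⟩ := Finite.exists_min c
  have key : ∀ w : List (Fin N), w ≠ [] → w.IsChain T →
      c x₁ ≤ θ ^ w.length * opNorm (wordProd A w).1 ^ 2 := by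
    intro w hw hch
    obtain ⟨b, w', rfl⟩ := List.exists_cons_of_ne_nil hw
    obtain ⟨α, hα⟩ := exists_pred hN hT b
    obtain ⟨β, hβ⟩ := crossBound_word hθ0 hinv hstep (b :: w') α
      (List.isChain_cons_cons.2 ⟨hα, hch⟩) (v α) (hv α) (B α) (hB α).le (hb α)
    refine (hx₁ (α, β)).trans ?_
    rw [div_le_iff₀ (hden (α, β))]
    have h2 := hβ _ _ (hp β) (hq β) (hpM β) (hqM β)
    set X := (wordProd A (b :: w')).1
    set n := (b :: w').length
    have h3 := norm_mulVec_le_opNorm X (v α)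
    have hB' := hB α
    have hX : 0 ≤ opNorm X := norm_nonneg _
    calc |wdg (p β) (q β)| ≤ _ := h2
      _ ≤ θ ^ n * B α * ((2 * (2 * opNorm X * ‖v α‖) * ‖p β‖) *
            (2 * (2 * opNorm X * ‖v α‖) * ‖q β‖)) := by
        gcongr
        · exact (abs_wdg_le _ _).trans (by gcongr)
        · exact (abs_wdg_le _ _).trans (by gcongr)
      _ = _ := by ring
  refine ⟨√(c x₁), Real.sqrt_pos.2 (hc _), (√θ)⁻¹, ?_, fun w hw hch => ?_⟩
  · exact (one_lt_inv₀ (Real.sqrt_pos.2 hθ0)).2 (by rw [Real.sqrt_lt' one_pos]; simpa using hθ1)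
  · have hk := key w hw hch
    have hX : 0 ≤ opNorm (wordProd A w).1 := norm_nonneg _
    have h4 : √(c x₁) ≤ √θ ^ w.length * opNorm (wordProd A w).1 := by
      apply Real.sqrt_le_iff.2 ⟨by positivity, ?_⟩
      rw [mul_pow, ← pow_mul, mul_comm w.length, pow_mul, Real.sq_sqrt hθ0.le]
      exact hk
    have h5 : 0 < √θ ^ w.length := by positivity
    rw [inv_pow, ← div_eq_mul_inv, ge_iff_le, div_le_iff₀ h5]
    linarith

/-! ### Orbit segments of a hyperbolic tuple -/

/-- `Orb T A s v L`: the vectors `v 0, …, v L` form an orbit segment driven by the admissible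
sequence of letters `s 0, …, s (L - 1)`; the letter `s j` carries `v j` to `v (j + 1)`. -/
def Orb {N : ℕ} (T : Fin N → Fin N → Prop) (A : Fin N → SL2) (s : ℕ → Fin N)
    (v : ℕ → Fin 2 → ℝ) (L : ℕ) : Prop :=
  (∀ j, j + 1 < L → T (s j) (s (j + 1))) ∧ ∀ j < L, v (j + 1) = (A (s j)).1 *ᵥ v j

/-- The product `A (s (n - 1)) ⋯ A (s 0)`. -/
def blk {N : ℕ} (A : Fin N → SL2) (s : ℕ → Fin N) : ℕ → SL2
  | 0 => 1
  | n + 1 => A (s n) * blk A s n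

theorem blk_succ_mulVec {N : ℕ} (A : Fin N → SL2) (s : ℕ → Fin N) (n : ℕ) (x : Fin 2 → ℝ) :
    (blk A s (n + 1)).1 *ᵥ x = (A (s n)).1 *ᵥ ((blk A s n).1 *ᵥ x) := by
  rw [blk, Matrix.SpecialLinearGroup.coe_mul, Matrix.mulVec_mulVec]

theorem blk_eq_wordProd {N : ℕ} (A : Fin N → SL2) (s : ℕ → Fin N) (n : ℕ) :
    blk A s n = wordProd A ((List.range n).map s) := by
  induction n with
  | zero => simp [blk, wordProd]
  | succ n ih =>
    rw [blk, ih, List.range_succ, List.map_append, wordProd_append]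
    simp [wordProd]

theorem isChain_map_range {N : ℕ} {T : Fin N → Fin N → Prop} {s : ℕ → Fin N} {n : ℕ}
    (h : ∀ j, j + 1 < n → T (s j) (s (j + 1))) : ((List.range n).map s).IsChain T := by
  rw [List.isChain_iff_getElem]
  intro i hi
  simp only [List.getElem_map, List.getElem_range]
  exact h i (by simpa using hi)

namespace Orb

variable {N : ℕ} {T : Fin N → Fin N → Prop} {A : Fin N → SL2} {s s' : ℕ → Fin N}
  {v v' : ℕ → Fin 2 → ℝ} {L L' : ℕ}

theorem mono (h : Orb T A s v L) (hL : L' ≤ L) : Orb T A s v L' :=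
  ⟨fun j hj => h.1 j (by omega), fun j hj => h.2 j (by omega)⟩

theorem shift (h : Orb T A s v (L' + L)) :
    Orb T A (fun j => s (L' + j)) (fun j => v (L' + j)) L :=
  ⟨fun j hj => h.1 (L' + j) (by omega), fun j hj => h.2 (L' + j) (by omega)⟩

/-- Two orbit segments can be concatenated. -/
theorem append (h : Orb T A s v L) (h' : Orb T A s' v' L')
    (hT : ∀ l, L = l + 1 → T (s l) (s' 0)) (hv : v L = v' 0) :
    Orb T A (fun j => if j < L then s j else s' (j - L))
      (fun j => if j < L then v j else v' (j - L)) (L + L') := by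
  refine ⟨fun j hj => ?_, fun j hj => ?_⟩
  · dsimp only
    rcases lt_trichotomy (j + 1) L with h1 | h1 | h1
    · rw [if_pos h1, if_pos (by omega)]; exact h.1 j h1
    · rw [if_pos (by omega), if_neg (by omega), h1, Nat.sub_self]; exact hT j h1.symm
    · rw [if_neg (by omega), if_neg (by omega), show j + 1 - L = j - L + 1 by omega]
      exact h'.1 _ (by omega)
  · dsimp only
    rcases lt_trichotomy (j + 1) L with h1 | h1 | h1
    · rw [if_pos h1, if_pos (by omega), if_pos (by omega)]; exact h.2 j (by omega)
    · rw [if_neg (by omega), if_pos (by omega), if_pos (by omega), h1, Nat.sub_self, ← hv, ← h1]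
      exact h.2 j (by omega)
    · rw [if_neg (by omega), if_neg (by omega), if_neg (by omega),
        show j + 1 - L = j - L + 1 by omega]
      exact h'.2 _ (by omega)

theorem eq_blk (h : Orb T A s v L) : ∀ j ≤ L, v j = (blk A s j).1 *ᵥ v 0 := by
  intro j
  induction j with
  | zero => intro _; simp [blk]
  | succ j ih => intro hj; rw [h.2 j (by omega), ih (by omega), blk_succ_mulVec]

theorem eq_zero_iff (h : Orb T A s v L) {i j : ℕ} (hi : i ≤ L) (hj : j ≤ L) :
    v i = 0 ↔ v j = 0 := by
  have : ∀ j ≤ L, v j = 0 ↔ v 0 = 0 := by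
    intro j hj
    rw [h.eq_blk j hj]
    constructor
    · intro h0
      by_contra hne
      exact mulVec_ne_zero _ hne h0
    · intro h0; rw [h0, Matrix.mulVec_zero]
  rw [this i hi, this j hj]

end Orb

/-- A vector can be completed to a unimodular frame by a vector of inverse norm. -/
theorem exists_dual (v : Fin 2 → ℝ) (hv : v ≠ 0) : ∃ w, wdg v w = 1 ∧ ‖w‖ ≤ 1 / ‖v‖ := by
  have h0 : 0 < ‖v‖ := norm_pos_iff.2 hv
  rcases norm_cases v with h | h
  · have hne : v 0 ≠ 0 := abs_pos.1 (h ▸ h0)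
    refine ⟨![0, 1 / v 0], by simp [wdg, hne], ?_⟩
    rw [h, pi_norm_le_iff_of_nonneg (by positivity)]
    intro i; fin_cases i <;> simp
  · have hne : v 1 ≠ 0 := abs_pos.1 (h ▸ h0)
    refine ⟨![-1 / v 1, 0], by simp [wdg]; field_simp, ?_⟩
    rw [h, pi_norm_le_iff_of_nonneg (by positivity)]
    intro i; fin_cases i <;> simp

theorem frame_expand {v w : Fin 2 → ℝ} (h : wdg v w = 1) (x : Fin 2 → ℝ) :
    x = wdg x w • v + wdg v x • w := by
  unfold wdg at *
  ext i; fin_cases i <;> simp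
  · linear_combination (-x 0) * h
  · linear_combination (-x 1) * h

/-- An orbit segment that stays above `τ` and has both ends below `ρ τ` forces the product of
matrices along it to have norm growing at most linearly with its length: completed by a dual
vector to a unimodular frame, the orbit makes the cocycle unipotent upper triangular with bounded
off-diagonal entries. -/
theorem blk_bound {N : ℕ} {T : Fin N → Fin N → Prop} {A : Fin N → SL2} {K : ℝ} (hK1 : 1 ≤ K)
    (hK : ∀ a v, ‖(A a).1 *ᵥ v‖ ≤ K * ‖v‖) {s : ℕ → Fin N} {v : ℕ → Fin 2 → ℝ} {n : ℕ}
    (h : Orb T A s v n) {τ ρ : ℝ} (hτ : 0 < τ) (hge : ∀ j ≤ n, τ ≤ ‖v j‖)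
    (h0 : ‖v 0‖ ≤ ρ * τ) (hn : ‖v n‖ ≤ ρ * τ) :
    opNorm (blk A s n).1 ≤ 8 * ρ + 8 * K * ρ ^ 2 * n := by
  have hpos : ∀ j ≤ n, 0 < ‖v j‖ := fun j hj => hτ.trans_le (hge j hj)
  have hρ : 0 ≤ ρ := by
    by_contra hcon
    push Not at hcon
    nlinarith [hpos 0 (by omega)]
  have hw : ∀ j, ∃ w, j ≤ n → wdg (v j) w = 1 ∧ ‖w‖ ≤ 1 / ‖v j‖ := by
    intro j
    by_cases hj : j ≤ n
    · obtain ⟨w, hw⟩ := exists_dual (v j) (norm_pos_iff.1 (hpos j hj))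
      exact ⟨w, fun _ => hw⟩
    · exact ⟨0, fun h => absurd h hj⟩
  choose w hw using hw
  have hwτ : ∀ j ≤ n, ‖w j‖ ≤ 1 / τ := fun j hj =>
    (hw j hj).2.trans (one_div_le_one_div_of_le hτ (hge j hj))
  have hfr : ∀ j ≤ n, ∃ c : ℝ, |c| ≤ j * (2 * K / τ ^ 2) ∧
      (blk A s j).1 *ᵥ w 0 = w j + c • v j := by
    intro j
    induction j with
    | zero => intro _; exact ⟨0, by simp, by simp [blk]⟩
    | succ j ih =>
      intro hj
      obtain ⟨c, hc, e⟩ := ih (by omega)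
      set y := (A (s j)).1 *ᵥ w j with hy
      have h1 : wdg (v (j + 1)) y = 1 := by
        rw [h.2 j (by omega), hy, wdg_mulVec]; exact (hw j (by omega)).1
      have h2 : y = wdg y (w (j + 1)) • v (j + 1) + w (j + 1) := by
        have := frame_expand (hw (j + 1) hj).1 y
        rwa [h1, one_smul] at this
      refine ⟨wdg y (w (j + 1)) + c, ?_, ?_⟩
      · have h3 : |wdg y (w (j + 1))| ≤ 2 * K / τ ^ 2 := by
          calc _ ≤ 2 * ‖y‖ * ‖w (j + 1)‖ := abs_wdg_le _ _
            _ ≤ 2 * (K * (1 / τ)) * (1 / τ) := by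
              gcongr
              · exact (hK _ _).trans (by gcongr; exact hwτ j (by omega))
              · exact hwτ _ hj
            _ = _ := by field_simp
        calc _ ≤ _ := abs_add_le _ _
          _ ≤ 2 * K / τ ^ 2 + j * (2 * K / τ ^ 2) := by gcongr
          _ = _ := by push_cast; ring
      · rw [blk_succ_mulVec, e, Matrix.mulVec_add, Matrix.mulVec_smul, ← h.2 j (by omega), ← hy,
          add_smul]
        conv_lhs => rw [h2]
        abel
  have hbd : ∀ x, ‖(blk A s n).1 *ᵥ x‖ ≤ (4 * ρ + 4 * K * ρ ^ 2 * n) * ‖x‖ := by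
    intro x
    obtain ⟨c, hc, e⟩ := hfr n le_rfl
    have h1 : (blk A s n).1 *ᵥ x =
        wdg x (w 0) • v n + wdg (v 0) x • (w n + c • v n) := by
      conv_lhs => rw [frame_expand (hw 0 (by omega)).1 x]
      rw [Matrix.mulVec_add, Matrix.mulVec_smul, Matrix.mulVec_smul, e, ← h.eq_blk n le_rfl]
    rw [h1]
    calc _ ≤ |wdg x (w 0)| * ‖v n‖ + |wdg (v 0) x| * (‖w n‖ + |c| * ‖v n‖) := by
          refine (norm_add_le _ _).trans ?_
          rw [norm_smul, norm_smul, Real.norm_eq_abs, Real.norm_eq_abs]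
          gcongr
          refine (norm_add_le _ _).trans ?_
          rw [norm_smul, Real.norm_eq_abs]
      _ ≤ 2 * ‖x‖ * (1 / τ) * (ρ * τ) + 2 * (ρ * τ) * ‖x‖ *
            (1 / τ + n * (2 * K / τ ^ 2) * (ρ * τ)) := by
          gcongr
          · exact (abs_wdg_le _ _).trans (by gcongr; exact hwτ 0 (by omega))
          · exact (abs_wdg_le _ _).trans (by gcongr)
          · exact hwτ n le_rfl
      _ = _ := by field_simp; ring
  calc _ ≤ 2 * (4 * ρ + 4 * K * ρ ^ 2 * n) := opNorm_le _ (by positivity) hbd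
    _ = _ := by ring

theorem exp_le_affine {C lam : ℝ} (hC : 0 < C) (hlam : 1 < lam) (a b : ℝ) :
    ∃ L : ℕ, ∀ n : ℕ, C * lam ^ n ≤ a + b * n → n ≤ L := by
  have h1 := (tendsto_pow_const_div_const_pow_of_one_lt 0 hlam).const_mul a
  have h2 := (tendsto_pow_const_div_const_pow_of_one_lt 1 hlam).const_mul b
  have h3 := h1.add h2
  simp only [mul_zero, add_zero] at h3
  obtain ⟨L, hL⟩ := Filter.eventually_atTop.1 (h3.eventually_lt_const hC)
  refine ⟨L, fun n hn => ?_⟩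
  by_contra hcon
  push Not at hcon
  have h4 := hL n hcon.le
  have h5 : 0 < lam ^ n := by positivity
  rw [pow_zero, pow_one, ← mul_div_assoc, ← mul_div_assoc, ← add_div, div_lt_iff₀ h5] at h4
  linarith

theorem exists_norm_bound {N : ℕ} (A : Fin N → SL2) :
    ∃ K : ℝ, 1 ≤ K ∧ ∀ a v, ‖(A a).1 *ᵥ v‖ ≤ K * ‖v‖ := by
  refine ⟨1 + ∑ a, 2 * opNorm (A a).1, ?_, fun a v => ?_⟩
  · have : 0 ≤ ∑ a, 2 * opNorm (A a).1 := Finset.sum_nonneg fun a _ =>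
      mul_nonneg (by norm_num) (norm_nonneg _)
    linarith
  · refine (norm_mulVec_le_opNorm _ _).trans ?_
    gcongr
    have := Finset.single_le_sum (f := fun a => 2 * opNorm (A a).1)
      (fun a _ => mul_nonneg (by norm_num) (norm_nonneg _)) (Finset.mem_univ a)
    linarith

theorem exists_norm_bound_inv {N : ℕ} (A : Fin N → SL2) :
    ∃ K : ℝ, 1 ≤ K ∧ (∀ a v, ‖(A a).1 *ᵥ v‖ ≤ K * ‖v‖) ∧
      ∀ a v, ‖v‖ ≤ K * ‖(A a).1 *ᵥ v‖ := by
  obtain ⟨K, hK1, hK⟩ := exists_norm_bound A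
  obtain ⟨K', hK1', hK'⟩ := exists_norm_bound fun a => (A a)⁻¹
  refine ⟨max K K', le_max_of_le_left hK1, fun a v => (hK a v).trans ?_, fun a v => ?_⟩
  · gcongr; exact le_max_left _ _
  · have := hK' a ((A a).1 *ᵥ v)
    rw [Matrix.mulVec_mulVec, ← Matrix.SpecialLinearGroup.coe_mul, inv_mul_cancel] at this
    simp only [Matrix.SpecialLinearGroup.coe_one, Matrix.one_mulVec] at this
    refine this.trans ?_
    gcongr; exact le_max_right _ _

/-- A quantitative exclusion principle for positive sequences that vary by bounded factors. If
long stretches between two comparable values must dip far below them, a sequence on `[0, 2 n]`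
cannot be nearly maximal at the midpoint. -/
theorem half_le_of_peak {K : ℝ} (hK : 1 ≤ K) (L : ℝ → ℕ) (p : ℕ → ℝ) (n : ℕ)
    (hpos : ∀ j ≤ 2 * n, 0 < p j) (hup : ∀ j < 2 * n, p (j + 1) ≤ K * p j)
    (hdn : ∀ j < 2 * n, p j ≤ K * p (j + 1))
    (hL : ∀ m k : ℕ, ∀ τ ρ : ℝ, m ≤ k → k ≤ 2 * n → 0 < τ → (∀ j, m ≤ j → j ≤ k → τ ≤ p j) →
      p m ≤ ρ * τ → p k ≤ ρ * τ → k ≤ m + L ρ)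
    (hpk : ∀ j ≤ 2 * n, p j ≤ 2 * p n) : n ≤ L K + L (2 * K ^ L K) := by
  obtain ⟨k, hk, hkmin⟩ := (Finset.Icc n (2 * n)).exists_min_image p ⟨n, by simp; omega⟩
  obtain ⟨m, hm, hmmin⟩ := (Finset.Icc 0 n).exists_min_image p ⟨n, by simp⟩
  simp only [Finset.mem_Icc] at hk hm hkmin hmmin
  have main : ∀ (p : ℕ → ℝ), (∀ j ≤ 2 * n, 0 < p j) → (∀ j < 2 * n, p (j + 1) ≤ K * p j) →
      (∀ j < 2 * n, p j ≤ K * p (j + 1)) →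
      (∀ m k : ℕ, ∀ τ ρ : ℝ, m ≤ k → k ≤ 2 * n → 0 < τ → (∀ j, m ≤ j → j ≤ k → τ ≤ p j) →
      p m ≤ ρ * τ → p k ≤ ρ * τ → k ≤ m + L ρ) → (∀ j ≤ 2 * n, p j ≤ 2 * p n) →
      ∀ m k, m ≤ n → n ≤ k → k ≤ 2 * n → (∀ j, n ≤ j ∧ j ≤ 2 * n → p k ≤ p j) → p m ≤ p k →
      n ≤ L K + L (2 * K ^ L K) := by
    clear hpos hup hdn hL hpk hk hkmin hm hmmin p k m
    intro p hpos hup hdn hL hpk m k hmn hnk hk2 hkmin hmk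
    -- `m'` is the last time before `n` at which `p` is at most `p k`
    let m' := Nat.findGreatest (fun j => p j ≤ p k) n
    have hm'n : m' ≤ n := Nat.findGreatest_le n
    have hm'k : p m' ≤ p k := Nat.findGreatest_spec (P := fun j => p j ≤ p k) hmn hmk
    have hgt : ∀ j, m' < j → j ≤ n → p k < p j := fun j h1 h2 =>
      not_le.1 (Nat.findGreatest_is_greatest (P := fun j => p j ≤ p k) h1 h2)
    have hafter : ∀ j, m' < j → j ≤ 2 * n → p k ≤ p j := by
      intro j h1 h2
      rcases le_total j n with h | h
      · exact (hgt j h1 h).le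
      · exact hkmin j ⟨h, h2⟩
    have hk0 := hpos k hk2
    have hK0 : 0 < K := by linarith
    have hm'low : p k ≤ K * p m' := by
      rcases hm'n.lt_or_eq with h | h
      · exact (hafter (m' + 1) (by omega) (by omega)).trans (hup m' (by omega))
      · have h1 := hkmin m' ⟨h.ge, by omega⟩
        nlinarith [hpos m' (by omega)]
    have hτ : ∀ j, m' ≤ j → j ≤ 2 * n → p k / K ≤ p j := by
      intro j h1 h2
      rw [div_le_iff₀ hK0]
      rcases h1.lt_or_eq with h | h
      · have := hafter j h h2
        nlinarith
      · rw [← h]; linarith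
    have e1 : K * (p k / K) = p k := by field_simp
    have h1 : k ≤ m' + L K := hL m' k (p k / K) K (by omega) hk2 (by positivity)
      (fun j h1 h2 => hτ j h1 (by omega)) (by rw [e1]; exact hm'k) e1.ge
    have h2 : ∀ i, n + i ≤ 2 * n → p n ≤ K ^ i * p (n + i) := by
      intro i
      induction i with
      | zero => intro _; simp
      | succ i ih =>
        intro hi
        calc p n ≤ K ^ i * p (n + i) := ih (by omega)
          _ ≤ K ^ i * (K * p (n + i + 1)) := by gcongr; exact hdn _ (by omega)
          _ = _ := by rw [pow_succ, mul_assoc]; rfl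
    have h3 : p n ≤ K ^ L K * p k := by
      have := h2 (k - n) (by omega)
      rw [show n + (k - n) = k by omega] at this
      refine this.trans ?_
      gcongr
      omega
    have hn0 := hpos n (by omega)
    have hKL : 0 < K ^ L K := by positivity
    have e2 : 2 * K ^ L K * (p n / K ^ L K) = 2 * p n := by field_simp
    have h4 : 2 * n ≤ k + L (2 * K ^ L K) := by
      refine hL k (2 * n) (p n / K ^ L K) _ hk2 le_rfl (by positivity) ?_ ?_ ?_
      · intro j hj1 hj2
        rw [div_le_iff₀ hKL]
        have := hkmin j ⟨by omega, hj2⟩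
        nlinarith
      · rw [e2]; exact hpk k hk2
      · rw [e2]; exact hpk _ le_rfl
    omega
  rcases le_total (p m) (p k) with h | h
  · exact main p hpos hup hdn hL hpk m k hm.2 hk.1 hk.2 hkmin h
  · have e : ∀ j, 2 * n - (2 * n - j) = j ∨ 2 * n < j := fun j => by omega
    refine main (fun j => p (2 * n - j)) (fun j _ => hpos _ (by omega)) (fun j hj => ?_)
      (fun j hj => ?_) (fun a b τ ρ hab hb hτ hge ha hb' => ?_) (fun j hj => ?_) (2 * n - k)
      (2 * n - m) (by omega) (by omega) (by omega) (fun j hj => ?_) ?_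
    · have := hdn (2 * n - (j + 1)) (by omega)
      rwa [show 2 * n - (j + 1) + 1 = 2 * n - j by omega] at this
    · have := hup (2 * n - (j + 1)) (by omega)
      rwa [show 2 * n - (j + 1) + 1 = 2 * n - j by omega] at this
    · have := hL (2 * n - b) (2 * n - a) τ ρ (by omega) (by omega) hτ (fun j h1 h2 => by
        have := hge (2 * n - j) (by omega) (by omega)
        rwa [show 2 * n - (2 * n - j) = j by omega] at this) hb' ha
      omega
    · have := hpk (2 * n - j) (by omega)
      rwa [show 2 * n - n = n by omega]
    · rw [show 2 * n - (2 * n - m) = m by omega]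
      exact hmmin _ (by omega)
    · rw [show 2 * n - (2 * n - m) = m by omega, show 2 * n - (2 * n - k) = k by omega]
      exact h

/-- Under uniform hyperbolicity, no nonzero orbit segment is nearly maximal at the midpoint of a
long interval. -/
theorem exists_no_peak {N : ℕ} {T : Fin N → Fin N → Prop} {A : Fin N → SL2}
    (h : UnifHypSub T A) : ∃ n₀ : ℕ, 1 ≤ n₀ ∧ ∀ s v, Orb T A s v (2 * n₀) →
      (∀ j ≤ 2 * n₀, ‖v j‖ ≤ 2 * ‖v n₀‖) → v n₀ = 0 := by
  obtain ⟨C, hC, lam, hlam, hUH⟩ := h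
  obtain ⟨K, hK1, hK, hKi⟩ := exists_norm_bound_inv A
  choose L hL using fun ρ : ℝ => exp_le_affine hC hlam (8 * ρ) (8 * K * ρ ^ 2)
  refine ⟨L K + L (2 * K ^ L K) + 1, by omega, fun s v ho hpk => ?_⟩
  set n := L K + L (2 * K ^ L K) + 1 with hn
  by_contra hne
  have hne' : ∀ j ≤ 2 * n, v j ≠ 0 := fun j hj h0 => hne ((ho.eq_zero_iff (by omega) hj).2 h0)
  have := half_le_of_peak hK1 L (fun j => ‖v j‖) n (fun j hj => norm_pos_iff.2 (hne' j hj))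
    (fun j hj => by rw [ho.2 j hj]; exact hK _ _)
    (fun j hj => by rw [ho.2 j hj]; exact hKi _ _)
    (fun m k τ ρ hmk hk hτ hge hm hk' => by
      obtain ⟨i, rfl⟩ := Nat.exists_eq_add_of_le hmk
      rcases Nat.eq_zero_or_pos i with rfl | hi
      · omega
      have ho' : Orb T A _ _ i := (ho.mono hk).shift
      have h1 := blk_bound hK1 hK ho' hτ (fun j hj => hge (m + j) (by omega) (by omega)) hm hk'
      rw [blk_eq_wordProd] at h1
      have h2 := hUH _ (by simp; omega) (isChain_map_range ho'.1)
      rw [List.length_map, List.length_range] at h2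
      have := hL ρ i (h2.le.trans h1)
      omega) hpk
  omega

/-! ### Cones defined by past orbits -/

/-- The thresholds `1 < kap n₀ 0 < kap n₀ 1 < ⋯ < kap n₀ n₀ = 2`. -/
noncomputable def kap (n₀ m : ℕ) : ℝ := 1 + (m + 1) / (n₀ + 1)

theorem one_lt_kap (n₀ m : ℕ) : 1 < kap n₀ m := by
  have : (0 : ℝ) < (m + 1) / (n₀ + 1) := by positivity
  unfold kap; linarith

theorem kap_lt_succ (n₀ m : ℕ) : kap n₀ m < kap n₀ (m + 1) := by
  unfold kap
  gcongr
  simp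

theorem kap_le_two {n₀ m : ℕ} (h : m ≤ n₀) : kap n₀ m ≤ 2 := by
  have : ((m : ℝ) + 1) / (n₀ + 1) ≤ 1 := by
    rw [div_le_one (by positivity)]
    gcongr
  unfold kap; linarith

/-- The cone attached to the letter `α`: vectors `x` that are the endpoint of an orbit segment of
length `n₀ + m`, with `m < n₀` and last letter `α`, whose norms are all controlled, through the
relation `R` (either `<` or `≤`), by `kap n₀ m` times the norm at time `n₀`. -/
def pastCone {N : ℕ} (T : Fin N → Fin N → Prop) (A : Fin N → SL2) (n₀ : ℕ) (R : ℝ → ℝ → Prop)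
    (α : Fin N) : Set (Fin 2 → ℝ) :=
  {x | ∃ m < n₀, ∃ s v, Orb T A s v (n₀ + m) ∧ s (n₀ + m - 1) = α ∧ v (n₀ + m) = x ∧
    ∀ i ≤ n₀ + m, R ‖v i‖ (kap n₀ m * ‖v n₀‖)}

/-- The matrix carrying the point of an orbit at time `n` to the point at time `i`. -/
def tr {N : ℕ} (A : Fin N → SL2) (s : ℕ → Fin N) (n i : ℕ) : Matrix (Fin 2) (Fin 2) ℝ :=
  (blk A s i * (blk A s n)⁻¹).1

theorem blk_congr {N : ℕ} (A : Fin N → SL2) {s s' : ℕ → Fin N} {n : ℕ}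
    (h : ∀ j < n, s j = s' j) : ∀ i ≤ n, blk A s i = blk A s' i := by
  intro i
  induction i with
  | zero => intro _; rfl
  | succ i ih => intro hi; rw [blk, blk, ih (by omega), h i (by omega)]

section

variable {N : ℕ} {T : Fin N → Fin N → Prop} {A : Fin N → SL2} {n₀ : ℕ} {R : ℝ → ℝ → Prop}
  {α β : Fin N} {x : Fin 2 → ℝ}

theorem mem_pastCone_iff : x ∈ pastCone T A n₀ R α ↔ ∃ m < n₀, ∃ s : ℕ → Fin N,
    (∀ j, j + 1 < n₀ + m → T (s j) (s (j + 1))) ∧ s (n₀ + m - 1) = α ∧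
    ∀ i ≤ n₀ + m, R ‖tr A s (n₀ + m) i *ᵥ x‖ (kap n₀ m * ‖tr A s (n₀ + m) n₀ *ᵥ x‖) := by
  constructor
  · rintro ⟨m, hm, s, v, ho, hα, rfl, h⟩
    have e : ∀ i ≤ n₀ + m, tr A s (n₀ + m) i *ᵥ v (n₀ + m) = v i := by
      intro i hi
      rw [ho.eq_blk i hi, ho.eq_blk _ le_rfl, Matrix.mulVec_mulVec, tr,
        ← Matrix.SpecialLinearGroup.coe_mul, inv_mul_cancel_right]
    refine ⟨m, hm, s, ho.1, hα, fun i hi => ?_⟩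
    rw [e i hi, e n₀ (by omega)]
    exact h i hi
  · rintro ⟨m, hm, s, hs, hα, h⟩
    refine ⟨m, hm, s, fun i => tr A s (n₀ + m) i *ᵥ x, ⟨hs, fun j _ => ?_⟩, hα, ?_, h⟩
    · dsimp only
      rw [tr, tr, Matrix.mulVec_mulVec, ← Matrix.SpecialLinearGroup.coe_mul, blk, mul_assoc]
    · simp [tr]

theorem pastCone_smul (hR : ∀ a b c : ℝ, 0 < c → (R (c * a) (c * b) ↔ R a b)) {c : ℝ}
    (hc : c ≠ 0) : c • x ∈ pastCone T A n₀ R α ↔ x ∈ pastCone T A n₀ R α := by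
  simp only [mem_pastCone_iff, Matrix.mulVec_smul, norm_smul, mul_left_comm _ ‖c‖,
    hR _ _ _ (norm_pos_iff.2 hc)]

theorem isOpen_pastCone : IsOpen (pastCone T A n₀ (· < ·) α) := by
  have : pastCone T A n₀ (· < ·) α = ⋃ m : ℕ, ⋃ s : ℕ → Fin N, {x | m < n₀ ∧
      (∀ j, j + 1 < n₀ + m → T (s j) (s (j + 1))) ∧ s (n₀ + m - 1) = α} ∩
      ⋂ i ∈ {i | i ≤ n₀ + m},
        {x | ‖tr A s (n₀ + m) i *ᵥ x‖ < kap n₀ m * ‖tr A s (n₀ + m) n₀ *ᵥ x‖} := by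
    ext x
    rw [mem_pastCone_iff]
    simp [and_assoc]
  rw [this]
  refine isOpen_iUnion fun m => isOpen_iUnion fun s => isOpen_const.inter ?_
  refine (Set.finite_le_nat _).isOpen_biInter fun i _ => isOpen_lt ?_ ?_
  · exact (Continuous.matrix_mulVec continuous_const continuous_id).norm
  · exact continuous_const.mul (Continuous.matrix_mulVec continuous_const continuous_id).norm

theorem isClosed_pastCone : IsClosed (pastCone T A n₀ (· ≤ ·) α) := by
  -- only the first `2 n₀` letters matter, so the union is finite
  let word : (Fin (2 * n₀) → Fin N) → ℕ → Fin N := fun t j => if h : j < 2 * n₀ then t ⟨j, h⟩ else α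
  have : pastCone T A n₀ (· ≤ ·) α = ⋃ m : Fin n₀, ⋃ t : Fin (2 * n₀) → Fin N, {x |
      (∀ j, j + 1 < n₀ + m.1 → T (word t j) (word t (j + 1))) ∧ word t (n₀ + m.1 - 1) = α} ∩
      ⋂ i ∈ {i | i ≤ n₀ + m.1},
        {x | ‖tr A (word t) (n₀ + m) i *ᵥ x‖ ≤ kap n₀ m * ‖tr A (word t) (n₀ + m) n₀ *ᵥ x‖} := by
    ext x
    rw [mem_pastCone_iff]
    simp only [Set.mem_iUnion, Set.mem_inter_iff, Set.mem_iInter, Set.mem_ofPred_eq]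
    constructor
    · rintro ⟨m, hm, s, hs, hα, h⟩
      have e : ∀ j < 2 * n₀, word (fun i => s i) j = s j := fun j hj => by simp [word, hj]
      have e' : ∀ i ≤ n₀ + m, tr A (word fun i => s i) (n₀ + m) i = tr A s (n₀ + m) i := by
        intro i hi
        rw [tr, tr, blk_congr A e i (by omega), blk_congr A e (n₀ + m) (by omega)]
      refine ⟨⟨m, hm⟩, fun i => s i, ⟨fun j hj => ?_, ?_⟩, fun i hi => ?_⟩
      · dsimp only at hj
        rw [e _ (by omega), e _ (by omega)]; exact hs j hj
      · dsimp only
        rw [e _ (by omega)]; exact hα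
      · dsimp only at hi ⊢
        rw [e' i hi, e' n₀ (by omega)]; exact h i hi
    · rintro ⟨m, t, ⟨hs, hα⟩, h⟩
      exact ⟨m, m.2, word t, hs, hα, h⟩
  rw [this]
  refine isClosed_iUnion_of_finite fun m => isClosed_iUnion_of_finite fun s =>
    isClosed_const.inter ?_
  refine isClosed_biInter fun i _ => isClosed_le ?_ ?_
  · exact (Continuous.matrix_mulVec continuous_const continuous_id).norm
  · exact continuous_const.mul (Continuous.matrix_mulVec continuous_const continuous_id).norm

theorem pastCone_lt_subset_le : pastCone T A n₀ (· < ·) α ⊆ pastCone T A n₀ (· ≤ ·) α := by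
  rintro x ⟨m, hm, s, v, ho, hα, hx, h⟩
  exact ⟨m, hm, s, v, ho, hα, hx, fun i hi => (h i hi).le⟩

/-- The endpoint of an orbit segment lies in the open cone of the last letter if it has maximal
norm: use threshold index `m = 0`. -/
theorem mem_pastCone_of_max (hn₀ : 1 ≤ n₀) {s : ℕ → Fin N} {v : ℕ → Fin 2 → ℝ} {j : ℕ}
    (ho : Orb T A s v j) (hj : n₀ ≤ j) (h0 : v j ≠ 0) (hmax : ∀ i ≤ j, ‖v i‖ ≤ ‖v j‖) :
    v j ∈ pastCone T A n₀ (· < ·) (s (j - 1)) := by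
  obtain ⟨d, rfl⟩ := Nat.exists_eq_add_of_le' hj
  refine ⟨0, by omega, _, _, ho.shift, ?_, rfl, fun i hi => ?_⟩
  · congr 1
    omega
  · have h1 := one_lt_kap n₀ 0
    have h2 := hmax (d + i) (by omega)
    have h3 := norm_pos_iff.2 h0
    dsimp only
    nlinarith

theorem Orb.snoc {s : ℕ → Fin N} {v : ℕ → Fin 2 → ℝ} {L : ℕ} (h : Orb T A s v L)
    (hT : ∀ l, L = l + 1 → T (s l) β) : ∃ s' v', Orb T A s' v' (L + 1) ∧ s' L = β ∧
      v' (L + 1) = (A β).1 *ᵥ v L ∧ ∀ j ≤ L, v' j = v j := by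
  have h' : Orb T A (fun _ => β) (fun j => if j = 0 then v L else (A β).1 *ᵥ v L) 1 := by
    refine ⟨fun j hj => by omega, fun j hj => ?_⟩
    obtain rfl : j = 0 := by omega
    simp
  refine ⟨_, _, h.append h' hT (by simp), by simp, by simp, fun j hj => ?_⟩
  rcases hj.lt_or_eq with h1 | rfl
  · simp [h1]
  · simp

/-- `NoPeak T A n₀`: no nonzero orbit segment of length `2 n₀` is maximal, up to the factor `2`,
at its midpoint. -/
def NoPeak (T : Fin N → Fin N → Prop) (A : Fin N → SL2) (n₀ : ℕ) : Prop :=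
  ∀ s v, Orb T A s v (2 * n₀) → (∀ j ≤ 2 * n₀, ‖v j‖ ≤ 2 * ‖v n₀‖) → v n₀ = 0

/-- The matrices carry the closed cones into the open ones: the new point either raises the
threshold index, or is the new maximum of its past and then resets that index to `0`; the index
cannot reach `n₀` by the absence of peaks. -/
theorem mulVec_mem_pastCone (hn₀ : 1 ≤ n₀) (hP : NoPeak T A n₀) (hT : T α β)
    (hx : x ∈ pastCone T A n₀ (· ≤ ·) α) (hx0 : x ≠ 0) :
    (A β).1 *ᵥ x ∈ pastCone T A n₀ (· < ·) β := by
  obtain ⟨m, hm, s, v, ho, hα, rfl, h⟩ := hx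
  obtain ⟨s', v', ho', hβ, hnew, hold⟩ := ho.snoc (β := β) (fun l hl => by
    rw [show l = n₀ + m - 1 by omega, hα]; exact hT)
  have hv0 : v n₀ ≠ 0 := fun h0 => hx0 ((ho.eq_zero_iff (by omega) le_rfl).1 h0)
  have hp := norm_pos_iff.2 hv0
  have hold' : ∀ i ≤ n₀ + m, ‖v' i‖ ≤ kap n₀ m * ‖v' n₀‖ := fun i hi => by
    rw [hold i hi, hold n₀ (by omega)]; exact h i hi
  rw [← hold n₀ (by omega)] at hp
  have hk := kap_lt_succ n₀ m
  rw [← hnew]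
  rcases lt_or_ge ‖v' (n₀ + m + 1)‖ (kap n₀ (m + 1) * ‖v' n₀‖) with hc | hc
  · have hall : ∀ i ≤ n₀ + m + 1, ‖v' i‖ < kap n₀ (m + 1) * ‖v' n₀‖ := by
      intro i hi
      rcases hi.lt_or_eq with h1 | rfl
      · exact (hold' i (by omega)).trans_lt (by gcongr)
      · exact hc
    rcases (show m + 1 ≤ n₀ from hm).lt_or_eq with h1 | h1
    · exact ⟨m + 1, h1, s', v', ho', hβ, rfl, hall⟩
    · have h2 := kap_le_two h1.le
      have := hP s' v' (by convert ho' using 1; omega) (fun j hj => by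
        refine (hall j (by omega)).le.trans ?_
        gcongr)
      rw [this, norm_zero] at hp
      exact absurd hp (lt_irrefl _)
  · have h1 : ∀ i ≤ n₀ + m + 1, ‖v' i‖ ≤ ‖v' (n₀ + m + 1)‖ := by
      intro i hi
      rcases hi.lt_or_eq with h2 | rfl
      · refine (hold' i (by omega)).trans (le_trans ?_ hc)
        gcongr
      · exact le_rfl
    have := mem_pastCone_of_max hn₀ ho' (by omega)
      (fun h0 => hv0 (by rw [← hold n₀ (by omega), ho'.eq_zero_iff (by omega) le_rfl]; exact h0)) h1
    rwa [Nat.add_sub_cancel, hβ] at this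

end

theorem norm_le_of_inv_bound (X : SL2) {b : ℝ} (hb : 0 ≤ b) (h : ∀ v, ‖v‖ ≤ b * ‖X.1 *ᵥ v‖) :
    opNorm X.1 ≤ 4 * b := by
  have : opNorm X.1 ≤ 2 * (2 * b) := by
    refine opNorm_le _ (by positivity) fun v => ?_
    by_cases hv : v = 0
    · simp [hv]
    have hXv := mulVec_ne_zero X hv
    have hp := norm_pos_iff.2 hXv
    obtain ⟨w, hw1, hw⟩ := exists_dual _ hXv
    have e : X.1 *ᵥ (X⁻¹.1 *ᵥ w) = w := by
      rw [Matrix.mulVec_mulVec, ← Matrix.SpecialLinearGroup.coe_mul, mul_inv_cancel]; simp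
    have h1 := h (X⁻¹.1 *ᵥ w)
    rw [e] at h1
    rw [← e, wdg_mulVec] at hw1
    have h2 := abs_wdg_le v (X⁻¹.1 *ᵥ w)
    rw [hw1, abs_one] at h2
    have h3 : 1 ≤ 2 * ‖v‖ * (b * (1 / ‖X.1 *ᵥ v‖)) := by
      refine h2.trans ?_
      gcongr
      exact h1.trans (by gcongr)
    calc ‖X.1 *ᵥ v‖ = 1 * ‖X.1 *ᵥ v‖ := (one_mul _).symm
      _ ≤ 2 * ‖v‖ * (b * (1 / ‖X.1 *ᵥ v‖)) * ‖X.1 *ᵥ v‖ := by gcongr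
      _ = _ := by field_simp
  linarith

theorem orb_blk {N : ℕ} {T : Fin N → Fin N → Prop} (A : Fin N → SL2) {s : ℕ → Fin N}
    (hs : ∀ j, T (s j) (s (j + 1))) (x : Fin 2 → ℝ) (n : ℕ) :
    Orb T A s (fun j => (blk A s j).1 *ᵥ x) n :=
  ⟨fun j _ => hs j, fun j _ => blk_succ_mulVec A s j x⟩

section

variable {N : ℕ} {T : Fin N → Fin N → Prop} {A : Fin N → SL2} {n₀ : ℕ}

theorem exists_seq (hN : 2 ≤ N) (hT : TransitiveSubshift T) :
    ∃ s : ℕ → Fin N, ∀ j, T (s j) (s (j + 1)) := by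
  choose f hf using exists_succ hN hT
  exact ⟨fun n => f^[n] ⟨0, by omega⟩, fun j => by
    dsimp only
    rw [Function.iterate_succ_apply']; exact hf _⟩

theorem exists_blk_large {s : ℕ → Fin N} (hs : ∀ j, T (s j) (s (j + 1))) (h : UnifHypSub T A)
    (b : ℝ) : ∃ n, b < opNorm (blk A s n).1 := by
  obtain ⟨C, hC, lam, hlam, hUH⟩ := h
  obtain ⟨L, hL⟩ := exp_le_affine hC hlam b 0
  refine ⟨L + 1, ?_⟩
  have h1 := hUH _ (by simp) (isChain_map_range (n := L + 1) fun j _ => hs j)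
  rw [← blk_eq_wordProd, List.length_map, List.length_range] at h1
  by_contra hcon
  push Not at hcon
  have := hL (L + 1) (by linarith)
  omega

/-- Every cone contains a nonzero vector: follow an orbit that grows a lot up to the time where
its norm is maximal, then push forward by transitivity. -/
theorem pastCone_nonempty (hN : 2 ≤ N) (hT : TransitiveSubshift T) (h : UnifHypSub T A)
    (hn₀ : 1 ≤ n₀) (hP : NoPeak T A n₀) (α : Fin N) :
    ∃ x ∈ pastCone T A n₀ (· < ·) α, x ≠ 0 := by
  obtain ⟨s, hs⟩ := exists_seq hN hT
  obtain ⟨K, hK1, hK, -⟩ := exists_norm_bound_inv A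
  obtain ⟨n, hn⟩ := exists_blk_large hs h (2 * K ^ n₀)
  obtain ⟨x, hx⟩ : ∃ x, K ^ n₀ * ‖x‖ < ‖(blk A s n).1 *ᵥ x‖ := by
    by_contra hcon
    push Not at hcon
    exact absurd (opNorm_le _ (by positivity) hcon) (not_le.2 hn)
  set v : ℕ → Fin 2 → ℝ := fun j => (blk A s j).1 *ᵥ x with hv
  have hv00 : v 0 = x := Matrix.one_mulVec x
  have hvK : ∀ j, ‖v j‖ ≤ K ^ j * ‖x‖ := by
    intro j
    induction j with
    | zero => rw [hv00]; simp
    | succ j ih =>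
      simp only [hv] at ih ⊢
      rw [blk_succ_mulVec, pow_succ', mul_assoc]
      exact (hK _ _).trans (by gcongr)
  obtain ⟨j, hj, hmax⟩ := (Finset.range (n + 1)).exists_max_image (fun j => ‖v j‖) ⟨0, by simp⟩
  simp only [Finset.mem_range, Nat.lt_succ_iff] at hj hmax
  have hbig : K ^ n₀ * ‖x‖ < ‖v j‖ := hx.trans_le (hmax n le_rfl)
  have hjn : n₀ ≤ j := by
    by_contra hcon
    push Not at hcon
    have h1 : K ^ j * ‖x‖ ≤ K ^ n₀ * ‖x‖ := by
      gcongr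
    linarith [hvK j]
  have hv0 : v j ≠ 0 := norm_pos_iff.1 (lt_of_le_of_lt (by positivity) hbig)
  have hmem := mem_pastCone_of_max hn₀ (orb_blk A hs x j) hjn hv0 fun i hi => hmax i (by omega)
  have hprop := reach hT (s (j - 1)) α
  induction hprop with
  | refl => exact ⟨_, hmem, hv0⟩
  | tail _ hbc ih =>
    obtain ⟨y, hy, hy0⟩ := ih
    exact ⟨_, mulVec_mem_pastCone hn₀ hP hbc (pastCone_lt_subset_le hy) hy0, mulVec_ne_zero _ hy0⟩

/-- No closed cone is everything: along an orbit that decays a lot, a vector of maximal norm lies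
outside the cone of its letter, as otherwise past and future would combine to a peak. -/
theorem pastCone_ne (hN : 2 ≤ N) (hT : TransitiveSubshift T) (h : UnifHypSub T A)
    (hn₀ : 1 ≤ n₀) (hP : NoPeak T A n₀) (α : Fin N) :
    ∃ x, x ≠ 0 ∧ x ∉ pastCone T A n₀ (· ≤ ·) α := by
  by_contra hall
  push Not at hall
  have hall' : ∀ γ, ∀ x, x ≠ 0 → x ∈ pastCone T A n₀ (· ≤ ·) γ := by
    intro γ
    have hprop := reach hT α γ
    induction hprop with
    | refl => exact hall
    | @tail b c _ hbc ih =>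
      intro y hy
      have e : (A c).1 *ᵥ ((A c)⁻¹.1 *ᵥ y) = y := by
        rw [Matrix.mulVec_mulVec, ← Matrix.SpecialLinearGroup.coe_mul, mul_inv_cancel]; simp
      have h0 := mulVec_ne_zero (A c)⁻¹ hy
      have := mulVec_mem_pastCone hn₀ hP hbc (ih _ h0) h0
      rw [e] at this
      exact pastCone_lt_subset_le this
  obtain ⟨s, hs⟩ := exists_seq hN hT
  obtain ⟨K, hK1, -, hK⟩ := exists_norm_bound_inv A
  obtain ⟨n, hn⟩ := exists_blk_large (s := fun j => s (j + 1)) (fun j => hs (j + 1)) h (4 * K ^ n₀)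
  obtain ⟨x, hx⟩ : ∃ x, K ^ n₀ * ‖(blk A (fun j => s (j + 1)) n).1 *ᵥ x‖ < ‖x‖ := by
    by_contra hcon
    push Not at hcon
    exact absurd (norm_le_of_inv_bound _ (by positivity) hcon) (not_le.2 hn)
  set v : ℕ → Fin 2 → ℝ := fun j => (blk A (fun j => s (j + 1)) j).1 *ᵥ x with hv
  have ho : Orb T A (fun j => s (j + 1)) v n := orb_blk A (fun j => hs (j + 1)) x n
  have hvK : ∀ i j, j + i ≤ n → ‖v j‖ ≤ K ^ i * ‖v (j + i)‖ := by
    intro i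
    induction i with
    | zero => intro j _; simp
    | succ i ih =>
      intro j hj
      refine (ih j (by omega)).trans ?_
      rw [pow_succ, mul_assoc]
      gcongr
      rw [← add_assoc, ho.2 (j + i) (by omega)]
      exact hK _ _
  obtain ⟨j, hj, hmax⟩ := (Finset.range (n + 1)).exists_max_image (fun j => ‖v j‖) ⟨0, by simp⟩
  simp only [Finset.mem_range, Nat.lt_succ_iff] at hj hmax
  have hbig : K ^ n₀ * ‖v n‖ < ‖v j‖ := by
    refine lt_of_lt_of_le hx ?_
    have hv00 : v 0 = x := Matrix.one_mulVec x
    have := hmax 0 (by omega)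
    rwa [hv00] at this
  have hjn : n₀ ≤ n - j := by
    by_contra hcon
    push Not at hcon
    have h1 := hvK (n - j) j (by omega)
    rw [show j + (n - j) = n by omega] at h1
    have h2 : K ^ (n - j) * ‖v n‖ ≤ K ^ n₀ * ‖v n‖ := by
      gcongr
    linarith
  have hv0 : v j ≠ 0 := norm_pos_iff.1 (lt_of_le_of_lt (by positivity) hbig)
  obtain ⟨m, hm, s₁, v₁, ho₁, hα, hx₁, hle⟩ := hall' (s j) (v j) hv0
  have hfut : Orb T A (fun i => s (j + i + 1)) (fun i => v (j + i)) (n - j) :=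
    (ho.mono (by omega : j + (n - j) ≤ n)).shift
  have hcat := ho₁.append hfut (fun l hl => by
    rw [show l = n₀ + m - 1 by omega, hα]; exact hs j) hx₁
  have hk2 := kap_le_two hm.le
  have hk1 := one_lt_kap n₀ m
  have e0 : (if n₀ < n₀ + m then v₁ n₀ else v (j + (n₀ - (n₀ + m)))) = v₁ n₀ := by
    split_ifs with hc
    · rfl
    · obtain rfl : m = 0 := by omega
      simpa using hx₁.symm
  have := hP _ _ (hcat.mono (by omega)) (fun i hi => by
    rw [e0]
    have hlast := hle (n₀ + m) le_rfl
    rw [hx₁] at hlast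
    have h2 : kap n₀ m * ‖v₁ n₀‖ ≤ 2 * ‖v₁ n₀‖ := by gcongr
    split_ifs with hc
    · exact (hle i hc.le).trans h2
    · exact ((hmax _ (by omega)).trans hlast).trans h2)
  rw [e0] at this
  rw [ho₁.eq_zero_iff (by omega) le_rfl, hx₁] at this
  exact hv0 this

end

/-! ### From hyperbolicity to multicones -/

/-- The subset of the projective line defined by a cone of vectors. -/
def projSet (S : Set (Fin 2 → ℝ)) : Set P1 := {x | x.rep ∈ S}

theorem mk_mem_projSet {S : Set (Fin 2 → ℝ)} (hS : ∀ (c : ℝ) x, c ≠ 0 → (c • x ∈ S ↔ x ∈ S))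
    {v : Fin 2 → ℝ} (hv : v ≠ 0) : Projectivization.mk ℝ v hv ∈ projSet S ↔ v ∈ S := by
  obtain ⟨a, ha⟩ := Projectivization.exists_smul_eq_mk_rep ℝ v hv
  have : (Projectivization.mk ℝ v hv).rep = (a : ℝ) • v := ha.symm
  show (Projectivization.mk ℝ v hv).rep ∈ S ↔ v ∈ S
  rw [this, hS _ _ a.ne_zero]

theorem isOpen_projSet {S : Set (Fin 2 → ℝ)} (hS : ∀ (c : ℝ) x, c ≠ 0 → (c • x ∈ S ↔ x ∈ S))
    (ho : IsOpen S) : IsOpen (projSet S) := by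
  rw [isOpen_P1_iff]
  convert ho.preimage (continuous_subtype_val (p := fun v : Fin 2 → ℝ => v ≠ 0)) using 1
  ext v
  exact mk_mem_projSet hS v.2

/-- Uniform hyperbolicity yields multicones. -/
theorem exists_multicone {N : ℕ} (hN : 2 ≤ N) {T : Fin N → Fin N → Prop}
    (hT : TransitiveSubshift T) {A : Fin N → SL2} (h : UnifHypSub T A) :
    ∃ M : Fin N → Set P1,
      (∀ α, (M α).Nonempty ∧ IsOpen (M α) ∧ closure (M α) ≠ Set.univ) ∧
      ∀ α β, T α β → projAct (A β) '' closure (M α) ⊆ M β := by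
  obtain ⟨n₀, hn₀, hP⟩ := exists_no_peak h
  have hlt : ∀ α (c : ℝ) x, c ≠ 0 →
      (c • x ∈ pastCone T A n₀ (· < ·) α ↔ x ∈ pastCone T A n₀ (· < ·) α) :=
    fun α c x hc => pastCone_smul (fun a b c hc => mul_lt_mul_iff_right₀ hc) hc
  have hle : ∀ α (c : ℝ) x, c ≠ 0 →
      (c • x ∈ pastCone T A n₀ (· ≤ ·) α ↔ x ∈ pastCone T A n₀ (· ≤ ·) α) :=
    fun α c x hc => pastCone_smul (fun a b c hc => mul_le_mul_iff_right₀ hc) hc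
  have hcl : ∀ α, closure (projSet (pastCone T A n₀ (· < ·) α)) ⊆
      projSet (pastCone T A n₀ (· ≤ ·) α) := by
    intro α
    refine closure_minimal (fun x hx => pastCone_lt_subset_le hx) ?_
    rw [← isOpen_compl_iff]
    exact isOpen_projSet (S := (pastCone T A n₀ (· ≤ ·) α)ᶜ)
      (fun c x hc => not_congr (hle α c x hc)) isClosed_pastCone.isOpen_compl
  refine ⟨fun α => projSet (pastCone T A n₀ (· < ·) α), fun α => ⟨?_, ?_, ?_⟩, ?_⟩
  · obtain ⟨x, hx, hx0⟩ := pastCone_nonempty hN hT h hn₀ hP α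
    exact ⟨_, (mk_mem_projSet (hlt α) hx0).2 hx⟩
  · exact isOpen_projSet (hlt α) isOpen_pastCone
  · intro hu
    obtain ⟨x, hx0, hx⟩ := pastCone_ne hN hT h hn₀ hP α
    exact hx ((mk_mem_projSet (hle α) hx0).1 (hcl α (hu ▸ Set.mem_univ _)))
  · rintro α β hαβ _ ⟨x, hx, rfl⟩
    have hx' := hcl α hx
    induction x using Projectivization.ind with
    | h v hv =>
      rw [mk_mem_projSet (hle α)] at hx'
      rw [projAct_mk, mk_mem_projSet (hlt β)]
      exact mulVec_mem_pastCone hn₀ hP hαβ hx' hv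

/-- Multicones can be shrunk so as to have finitely many components with disjoint closures. -/
theorem exists_finite_multicone {N : ℕ} (hN : 2 ≤ N) {T : Fin N → Fin N → Prop}
    (hT : TransitiveSubshift T) {A : Fin N → SL2} {M : Fin N → Set P1}
    (hM : ∀ α, (M α).Nonempty ∧ IsOpen (M α) ∧ closure (M α) ≠ Set.univ)
    (hinv : ∀ α β, T α β → projAct (A β) '' closure (M α) ⊆ M β) :
    ∃ M : Fin N → Set P1,
      (∀ α, (M α).Nonempty ∧ IsOpen (M α) ∧ closure (M α) ≠ Set.univ) ∧
      (∀ α β, T α β → projAct (A β) '' closure (M α) ⊆ M β) ∧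
      ∀ α, FinCompDisjClosures (M α) := by
  -- `K β` is the compact set of images that a smaller cone at `β` must still contain
  let K : Fin N → Set P1 := fun β => ⋃ α : {α // T α β}, projAct (A β) '' closure (M α)
  have hK : ∀ β, IsCompact (K β) := fun β => isCompact_iUnion fun α =>
    isClosed_closure.isCompact.image (continuous_projAct _)
  have hKM : ∀ β, K β ⊆ M β := fun β => Set.iUnion_subset fun α => hinv _ _ α.2
  have hKne : ∀ β, (K β).Nonempty := by
    intro β
    obtain ⟨α, hα⟩ := exists_pred hN hT β
    obtain ⟨x, hx⟩ := (hM α).1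
    exact ⟨_, Set.mem_iUnion.2 ⟨⟨α, hα⟩, x, subset_closure hx, rfl⟩⟩
  choose F hF using fun β => exists_thinning (hK β) (hM β).2.1 (hKM β)
  have hopen : ∀ β, IsOpen (⋃₀ (F β : Set (Set P1))) := fun β =>
    isOpen_sUnion fun U hU => ((hF β).1 U hU).1
  have hcl : ∀ β, closure (⋃₀ (F β : Set (Set P1))) ⊆ M β := by
    intro β
    rw [Set.sUnion_eq_biUnion, (F β).finite_toSet.closure_biUnion]
    exact Set.iUnion₂_subset fun U hU => ((hF β).1 U hU).2.2
  refine ⟨fun β => ⋃₀ (F β : Set (Set P1)),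
    fun β => ⟨(hKne β).mono (hF β).2.1, hopen β, fun hu => ?_⟩, fun α β hαβ => ?_, fun β =>
      finComp_sUnion (fun U hU => ⟨((hF β).1 U hU).1, ((hF β).1 U hU).2.1⟩) (hF β).2.2⟩
  · exact (hM β).2.2 (Set.univ_subset_iff.1 (hu ▸ (hcl β).trans subset_closure))
  · refine Set.Subset.trans ?_ (hF β).2.1
    exact (Set.image_mono ((hcl α).trans subset_closure)).trans
      (Set.subset_iUnion (fun α : {α // T α β} => projAct (A β) '' closure (M α)) ⟨α, hαβ⟩)

/-- **Multicone criterion for subshifts of finite type**: an `N`-tuple is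
uniformly hyperbolic w.r.t. a transitive subshift of finite type iff it admits a
family of multicones `(M_α)`; moreover each `M_α` can be chosen with finitely
many connected components having pairwise disjoint closures. -/
theorem multicone_subshift {N : ℕ} (hN : 2 ≤ N) (T : Fin N → Fin N → Prop)
    (hT : TransitiveSubshift T) (A : Fin N → SL2) :
    (UnifHypSub T A ↔
      ∃ M : Fin N → Set P1,
        (∀ α, (M α).Nonempty ∧ IsOpen (M α) ∧ closure (M α) ≠ Set.univ) ∧
        ∀ α β, T α β → projAct (A β) '' closure (M α) ⊆ M β) ∧
    (UnifHypSub T A →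
      ∃ M : Fin N → Set P1,
        (∀ α, (M α).Nonempty ∧ IsOpen (M α) ∧ closure (M α) ≠ Set.univ) ∧
        (∀ α β, T α β → projAct (A β) '' closure (M α) ⊆ M β) ∧
        ∀ α, FinCompDisjClosures (M α)) := by
  refine ⟨⟨exists_multicone hN hT, ?_⟩, fun h => ?_⟩
  · rintro ⟨M, hM, hinv⟩
    exact unifHypSub_of_multicone hN hT hM hinv
  · obtain ⟨M, hM, hinv⟩ := exists_multicone hN hT h
    exact exists_finite_multicone hN hT hM hinv
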